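/- arXiv:1309.7209 — 3 statements merged into one kernel-verified Lean document; each statement's English description precedes it below -/
import Mathlib

section
/- (Theorem 1, part 1: limiting acceptance probability.) For each dimension d, let π^(d) be an everywhere-positive probability density on ℝ^d whose logarithm L^(d) = log π^(d) is twice continuously differentiable, with Hessian H^(d)(x) = [∂²_{ij} L^(d)(x)]. Let X^(d) ∼ π^(d), let Z^(d) ∼ N(0, I_d) be independent of X^(d), and let B be a real random variable, independent of (X^(d), Z^(d)) and with the same distribution for every d, having a Lebesgue density ρ satisfying ρ(b) = e^{−b} ρ(−b). Suppose there exist constants s^(d) > 0 such that, as d → ∞, (i) ‖∇L^(d)(X^(d))‖ / s^(d) → 1 in probability, (ii) ΔL^(d)(X^(d)) / (s^(d))² → −1 in probability, (iii) Trace[(H^(d)(X^(d)))²] / (s^(d))⁴ → 0 in probability, and (iv) for every σ > 0 and ε > 0, P( sup_{t∈(0,1)} | ⟨Z^(d), [H^(d)(X^(d) + t σ Z^(d)/s^(d)) − H^(d)(X^(d))] Z^(d)⟩ | / (s^(d))² > ε ) → 0. Fix ℓ > 0 and set λ^(d) = ℓ / s^(d). Then the mean acceptance probability α^(d)(ℓ)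 := E[ min(1, exp( L^(d)(X^(d) + λ^(d) Z^(d)) − L^(d)(X^(d)) + B )) ] converges, as d → ∞, to α(ℓ) := 2 · E[Φ(B/ℓ − ℓ/2)], where Φ is the standard normal cumulative distribution function. -/
open MeasureTheory ProbabilityTheory Real Filter Topology

/-- The standard normal cumulative distribution function `Φ`. -/
noncomputable def stdNormalCDF (x : ℝ) : ℝ :=
  ∫ t in Set.Iic x, Real.exp (-t ^ 2 / 2) / Real.sqrt (2 * Real.pi)

/-- The standard Gaussian measure `N(0, I_d)` on `ℝ^d`. -/
noncomputable def stdGaussian (d : ℕ) : Measure (Fin d → ℝ) :=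
  Measure.pi fun _ : Fin d => gaussianReal 0 1

/-- The Hessian matrix `H(x) = [∂²_{ij} L(x)]` of a function `L` on `ℝ^d`. -/
noncomputable def hessian {d : ℕ} (L : (Fin d → ℝ) → ℝ) (x : Fin d → ℝ) :
    Matrix (Fin d) (Fin d) ℝ := fun i j =>
  fderiv ℝ (fun y => fderiv ℝ L y (Pi.single j 1)) x (Pi.single i 1)

/-- The squared Euclidean norm of the gradient of `L` at `x`, `‖∇L(x)‖²`. -/
noncomputable def gradNormSq {d : ℕ} (L : (Fin d → ℝ) → ℝ) (x : Fin d → ℝ) : ℝ :=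
  ∑ i, (fderiv ℝ L x (Pi.single i 1)) ^ 2


lemma gm_moments : (∀ n : ℕ, Integrable (fun x : ℝ => x ^ n) (gaussianReal 0 1)) ∧
    (∫ x, x ∂gaussianReal 0 1 = 0) ∧ (∫ x, x ^ 2 ∂gaussianReal 0 1 = 1) ∧
    (∫ x, x ^ 3 ∂gaussianReal 0 1 = 0) ∧ (∫ x, x ^ 4 ∂gaussianReal 0 1 = 3) := by
  have hmem : (0:ℝ) ∈ interior (integrableExpSet (id : ℝ → ℝ) (gaussianReal 0 1)) := by
    rw [integrableExpSet_id_gaussianReal]; simp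
  have h := fun n => iteratedDeriv_mgf_zero hmem n
  have hm : mgf id (gaussianReal 0 1) = fun t : ℝ => rexp (t ^ 2 / 2) := by
    rw [mgf_id_gaussianReal]; simp
  have hE : ∀ t : ℝ, HasDerivAt (fun t : ℝ => rexp (t ^ 2 / 2)) (rexp (t ^ 2 / 2) * t) t := by
    intro t
    have := (((hasDerivAt_id t).pow 2).div_const 2).exp
    refine this.congr_deriv ?_
    simp
  have d1 : deriv (fun t : ℝ => rexp (t ^ 2 / 2)) = fun t => rexp (t ^ 2 / 2) * t :=
    funext fun t => (hE t).deriv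
  have d2 : deriv (fun t : ℝ => rexp (t ^ 2 / 2) * t) = fun t => rexp (t ^ 2 / 2) * (1 + t ^ 2) := by
    funext t
    have := (hE t).mul (hasDerivAt_id t)
    refine (this.congr_deriv ?_).deriv
    simp; ring
  have d3 : deriv (fun t : ℝ => rexp (t ^ 2 / 2) * (1 + t ^ 2))
      = fun t => rexp (t ^ 2 / 2) * (3 * t + t ^ 3) := by
    funext t
    have := (hE t).mul (((hasDerivAt_id t).pow 2).const_add 1)
    refine (this.congr_deriv ?_).deriv
    simp; ring
  have d4 : deriv (fun t : ℝ => rexp (t ^ 2 / 2) * (3 * t + t ^ 3))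
      = fun t => rexp (t ^ 2 / 2) * (3 + 6 * t ^ 2 + t ^ 4) := by
    funext t
    have := (hE t).mul (((hasDerivAt_id t).const_mul 3).add ((hasDerivAt_id t).pow 3))
    refine (this.congr_deriv ?_).deriv
    simp; ring
  refine ⟨fun n => ?_, ?_, ?_, ?_, ?_⟩
  · have := integrable_pow_of_mem_interior_integrableExpSet hmem n
    simpa using this
  · simp
  · have := h 2
    simp only [hm, iteratedDeriv_succ, iteratedDeriv_zero, d1, d2] at this
    simpa using this.symm
  · have := h 3
    simp only [hm, iteratedDeriv_succ, iteratedDeriv_zero, d1, d2, d3] at this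
    simpa using this.symm
  · have := h 4
    simp only [hm, iteratedDeriv_succ, iteratedDeriv_zero, d1, d2, d3, d4] at this
    simpa using this.symm

instance instProbStd (d : ℕ) : IsProbabilityMeasure (_root_.stdGaussian d) := by
  unfold _root_.stdGaussian; infer_instance

lemma std_map_lin {d : ℕ} (a : Fin d → ℝ) :
    (_root_.stdGaussian d).map (fun z => ∑ i, a i * z i)
      = (gaussianReal 0 1).map (fun u => Real.sqrt (∑ i, a i ^ 2) * u) := by
  have hmeas : Measurable (fun z : Fin d → ℝ => ∑ i, a i * z i) :=
    (continuous_finsetSum _ fun i _ => continuous_const.mul (continuous_apply i)).measurable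
  have : IsProbabilityMeasure ((_root_.stdGaussian d).map (fun z => ∑ i, a i * z i)) :=
    Measure.isProbabilityMeasure_map hmeas.aemeasurable
  rw [gaussianReal_map_const_mul]
  apply Measure.ext_of_charFun
  funext t
  rw [charFun_apply_real, charFun_gaussianReal, integral_map hmeas.aemeasurable (by fun_prop)]
  have h1 : ∀ z : Fin d → ℝ, Complex.exp (t * ((∑ i, a i * z i : ℝ) : ℂ) * Complex.I)
      = ∏ i, Complex.exp (((t * a i : ℝ) : ℂ) * (z i : ℂ) * Complex.I) := by
    intro z
    rw [← Complex.exp_sum]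
    congr 1
    push_cast
    rw [Finset.mul_sum, Finset.sum_mul]
    exact Finset.sum_congr rfl fun i _ => by ring
  simp_rw [h1]
  unfold _root_.stdGaussian
  rw [integral_fintype_prod_eq_prod (𝕜 := ℂ)
    (f := fun i (x : ℝ) => Complex.exp (((t * a i : ℝ) : ℂ) * (x : ℂ) * Complex.I))]
  have h2 : ∀ i, ∫ x : ℝ, Complex.exp (((t * a i : ℝ) : ℂ) * (x : ℂ) * Complex.I) ∂gaussianReal 0 1
      = Complex.exp (- ((t * a i : ℝ) : ℂ) ^ 2 / 2) := by
    intro i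
    rw [← charFun_apply_real, charFun_gaussianReal]
    congr 1
    simp; ring
  simp_rw [h2]
  rw [← Complex.exp_sum]
  congr 1
  have h3 : (Real.sqrt (∑ i, a i ^ 2)) ^ 2 = ∑ i, a i ^ 2 :=
    Real.sq_sqrt (Finset.sum_nonneg fun i _ => sq_nonneg _)
  simp only [NNReal.coe_mk, mul_zero, Complex.ofReal_zero, zero_mul, mul_one, zero_sub,
    Complex.ofReal_mul]
  rw [show (((⟨(Real.sqrt (∑ i, a i ^ 2)) ^ 2, sq_nonneg _⟩ : NNReal) : ℝ) : ℂ) = ((∑ i, a i ^ 2 : ℝ) : ℂ) by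
    simp [h3]]
  push_cast
  rw [Finset.sum_mul, Finset.sum_div, ← Finset.sum_neg_distrib]
  exact Finset.sum_congr rfl fun i _ => by ring

lemma gm_nat (c : ℕ → ℝ) (hc : c = fun n => ∫ x, x ^ n ∂gaussianReal 0 1) :
    c 0 = 1 ∧ c 1 = 0 ∧ c 2 = 1 ∧ c 3 = 0 ∧ c 4 = 3 := by
  obtain ⟨_, h1, h2, h3, h4⟩ := gm_moments
  subst hc
  refine ⟨by simp, by simp, h2, h3, h4⟩

lemma prod4_eq {d : ℕ} (i j k l : Fin d) (z : Fin d → ℝ) :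
    z i * z j * z k * z l = ∏ m, z m ^ ((if m = i then 1 else 0) + (if m = j then 1 else 0)
      + (if m = k then 1 else 0) + (if m = l then 1 else 0)) := by
  simp_rw [pow_add, Finset.prod_mul_distrib]
  simp [pow_ite]

lemma prod2_eq {d : ℕ} (i j : Fin d) (z : Fin d → ℝ) :
    z i * z j = ∏ m, z m ^ ((if m = i then 1 else 0) + (if m = j then 1 else 0)) := by
  simp_rw [pow_add, Finset.prod_mul_distrib]
  simp [pow_ite]

lemma int4 {d : ℕ} (i j k l : Fin d) :
    Integrable (fun z : Fin d → ℝ => z i * z j * z k * z l) (_root_.stdGaussian d) := by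
  simp_rw [prod4_eq i j k l]
  unfold _root_.stdGaussian
  exact Integrable.fintype_prod (f := fun m (x : ℝ) => x ^ ((if m = i then 1 else 0) + (if m = j then 1 else 0)
      + (if m = k then 1 else 0) + (if m = l then 1 else 0))) fun m => gm_moments.1 _

lemma int2 {d : ℕ} (i j : Fin d) :
    Integrable (fun z : Fin d → ℝ => z i * z j) (_root_.stdGaussian d) := by
  simp_rw [prod2_eq i j]
  unfold _root_.stdGaussian
  exact Integrable.fintype_prod (f := fun m (x : ℝ) => x ^ ((if m = i then 1 else 0) + (if m = j then 1 else 0))) fun m => gm_moments.1 _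

lemma mom2 {d : ℕ} (i j : Fin d) :
    ∫ z, z i * z j ∂(_root_.stdGaussian d) = if i = j then 1 else 0 := by
  simp_rw [prod2_eq i j]
  unfold _root_.stdGaussian
  rw [integral_fintype_prod_eq_prod (f := fun m (x : ℝ) => x ^ ((if m = i then 1 else 0) + (if m = j then 1 else 0)))]
  obtain ⟨c0, c1, c2, c3, c4⟩ := gm_nat _ rfl
  by_cases h : i = j
  · subst h
    rw [if_pos rfl]
    refine Finset.prod_eq_one fun m _ => ?_
    by_cases hm : m = i <;> simp_all
  · rw [if_neg h]
    refine Finset.prod_eq_zero (Finset.mem_univ i) ?_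
    simp_all

lemma mom4 {d : ℕ} (i j k l : Fin d) :
    ∫ z, z i * z j * z k * z l ∂(_root_.stdGaussian d) =
      (if i = j then 1 else 0) * (if k = l then 1 else 0)
      + (if i = k then 1 else 0) * (if j = l then 1 else 0)
      + (if i = l then 1 else 0) * (if j = k then 1 else 0) := by
  simp_rw [prod4_eq i j k l]
  unfold _root_.stdGaussian
  rw [integral_fintype_prod_eq_prod (f := fun m (x : ℝ) => x ^ ((if m = i then 1 else 0) + (if m = j then 1 else 0)
      + (if m = k then 1 else 0) + (if m = l then 1 else 0)))]
  obtain ⟨c, hc⟩ : ∃ c : ℕ → ℝ, c = fun n => ∫ x, x ^ n ∂gaussianReal 0 1 := ⟨_, rfl⟩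
  obtain ⟨c0, c1, c2, c3, c4⟩ := gm_nat c hc
  have hc' : ∀ n, ∫ x, x ^ n ∂gaussianReal 0 1 = c n := fun n => by rw [hc]
  simp_rw [hc']
  clear hc' hc
  have key0 : ∀ m : Fin d, c ((if m = i then 1 else 0) + (if m = j then 1 else 0)
      + (if m = k then 1 else 0) + (if m = l then 1 else 0)) = 0 → ∏ m, c ((if m = i then 1 else 0) + (if m = j then 1 else 0)
      + (if m = k then 1 else 0) + (if m = l then 1 else 0)) = 0 := fun m hm =>
      Finset.prod_eq_zero (Finset.mem_univ m) hm
  by_cases hall : i = j ∧ i = k ∧ i = l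
  · obtain ⟨rfl, rfl, rfl⟩ := hall
    rw [Finset.prod_eq_single i]
    · simp [c4]; norm_num
    · intro b _ hb; simp [hb, c0]
    · simp
  by_cases hp : (i = j ∧ k = l) ∨ (i = k ∧ j = l) ∨ (i = l ∧ j = k)
  · rw [Finset.prod_eq_one]
    · rcases hp with ⟨rfl, rfl⟩ | ⟨rfl, rfl⟩ | ⟨rfl, rfl⟩ <;> simp_all
    · intro m _
      rcases hp with ⟨rfl, rfl⟩ | ⟨rfl, rfl⟩ | ⟨rfl, rfl⟩ <;> split_ifs <;> simp_all
  · have h0 : ∏ m, c ((if m = i then 1 else 0) + (if m = j then 1 else 0)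
      + (if m = k then 1 else 0) + (if m = l then 1 else 0)) = 0 := by
      by_cases hij : i = j
      · subst hij
        have hkl : k ≠ l := by tauto
        by_cases hik : i = k
        · subst hik; apply key0 l; simp [hkl.symm, c1]
        · apply key0 k; simp [hkl, Ne.symm hik, c1]
      · by_cases hik : i = k
        · subst hik
          apply key0 j
          have : j ≠ l := by tauto
          simp [this, Ne.symm hij, c1]
        · by_cases hil : i = l
          · subst hil
            apply key0 j
            have : j ≠ k := by tauto
            simp [this, Ne.symm hij, c1]
          · apply key0 i
            simp [hij, hik, hil, c1]
    rw [h0]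
    split_ifs <;> simp_all

lemma quad_var {d : ℕ} (M : Matrix (Fin d) (Fin d) ℝ) (hM : ∀ i j, M i j = M j i) :
    Integrable (fun z : Fin d → ℝ => (∑ i, ∑ j, z i * M i j * z j - Matrix.trace M) ^ 2) (_root_.stdGaussian d) ∧
    ∫ z, (∑ i, ∑ j, z i * M i j * z j - Matrix.trace M) ^ 2 ∂(_root_.stdGaussian d)
      = 2 * Matrix.trace (M * M) := by
  have e : ∀ z : Fin d → ℝ, (∑ i, ∑ j, z i * M i j * z j - Matrix.trace M) ^ 2
      = (∑ i, ∑ j, ∑ k, ∑ l, (M i j * M k l) * (z i * z j * z k * z l))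
        - 2 * Matrix.trace M * (∑ i, ∑ j, M i j * (z i * z j)) + Matrix.trace M ^ 2 := by
    intro z
    have h1 : (∑ i, ∑ j, ∑ k, ∑ l, (M i j * M k l) * (z i * z j * z k * z l))
        = (∑ i, ∑ j, z i * M i j * z j) * (∑ i, ∑ j, z i * M i j * z j) := by
      simp_rw [Finset.sum_mul, Finset.mul_sum]
      refine Finset.sum_congr rfl fun i _ => Finset.sum_congr rfl fun j _ =>
        Finset.sum_congr rfl fun k _ => Finset.sum_congr rfl fun l _ => by ring
    have h2 : (∑ i, ∑ j, M i j * (z i * z j)) = ∑ i, ∑ j, z i * M i j * z j :=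
      Finset.sum_congr rfl fun i _ => Finset.sum_congr rfl fun j _ => by ring
    rw [h1, h2]; ring
  have i4 : ∀ i j k l : Fin d, Integrable (fun z : Fin d → ℝ => (M i j * M k l) * (z i * z j * z k * z l)) (_root_.stdGaussian d) :=
    fun i j k l => (int4 i j k l).const_mul _
  have i2 : ∀ i j : Fin d, Integrable (fun z : Fin d → ℝ => M i j * (z i * z j)) (_root_.stdGaussian d) :=
    fun i j => (int2 i j).const_mul _
  have I4 : Integrable (fun z : Fin d → ℝ => ∑ i, ∑ j, ∑ k, ∑ l, (M i j * M k l) * (z i * z j * z k * z l)) (_root_.stdGaussian d) :=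
    integrable_finsetSum _ fun i _ => integrable_finsetSum _ fun j _ =>
      integrable_finsetSum _ fun k _ => integrable_finsetSum _ fun l _ => i4 i j k l
  have I2 : Integrable (fun z : Fin d → ℝ => ∑ i, ∑ j, M i j * (z i * z j)) (_root_.stdGaussian d) :=
    integrable_finsetSum _ fun i _ => integrable_finsetSum _ fun j _ => i2 i j
  simp_rw [e]
  refine ⟨(I4.sub (I2.const_mul _)).add (integrable_const _), ?_⟩
  have IS : Integrable (fun z : Fin d → ℝ => (∑ i, ∑ j, ∑ k, ∑ l, (M i j * M k l) * (z i * z j * z k * z l))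
      - 2 * Matrix.trace M * (∑ i, ∑ j, M i j * (z i * z j))) (_root_.stdGaussian d) :=
    I4.sub (I2.const_mul _)
  rw [integral_add IS (integrable_const _), integral_sub I4 (I2.const_mul _),
    integral_const_mul, integral_const]
  have E2 : ∫ z : Fin d → ℝ, ∑ i, ∑ j, M i j * (z i * z j) ∂(_root_.stdGaussian d) = Matrix.trace M := by
    rw [integral_finsetSum _ fun i _ => integrable_finsetSum _ fun j _ => i2 i j]
    simp_rw [integral_finsetSum _ fun j _ => i2 _ j, integral_const_mul, mom2]
    simp [Matrix.trace]
  have E4 : ∫ z : Fin d → ℝ, ∑ i, ∑ j, ∑ k, ∑ l, (M i j * M k l) * (z i * z j * z k * z l) ∂(_root_.stdGaussian d)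
      = Matrix.trace M ^ 2 + 2 * Matrix.trace (M * M) := by
    rw [integral_finsetSum _ fun i _ => integrable_finsetSum _ fun j _ =>
      integrable_finsetSum _ fun k _ => integrable_finsetSum _ fun l _ => i4 i j k l]
    have : ∀ i j, ∫ z : Fin d → ℝ, ∑ k, ∑ l, (M i j * M k l) * (z i * z j * z k * z l) ∂(_root_.stdGaussian d)
       = ∑ k, ∑ l, (M i j * M k l) * ((if i = j then 1 else 0) * (if k = l then 1 else 0)
      + (if i = k then 1 else 0) * (if j = l then 1 else 0)
      + (if i = l then 1 else 0) * (if j = k then 1 else 0)) := by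
      intro i j
      rw [integral_finsetSum _ fun k _ => integrable_finsetSum _ fun l _ => i4 i j k l]
      simp_rw [integral_finsetSum _ fun l _ => i4 i j _ l, integral_const_mul, mom4]
    have h3 : ∀ i, ∫ z : Fin d → ℝ, ∑ j, ∑ k, ∑ l, (M i j * M k l) * (z i * z j * z k * z l) ∂(_root_.stdGaussian d)
       = ∑ j, ∑ k, ∑ l, (M i j * M k l) * ((if i = j then 1 else 0) * (if k = l then 1 else 0)
      + (if i = k then 1 else 0) * (if j = l then 1 else 0)
      + (if i = l then 1 else 0) * (if j = k then 1 else 0)) := by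
      intro i
      rw [integral_finsetSum _ fun j _ => 
        integrable_finsetSum _ fun k _ => integrable_finsetSum _ fun l _ => i4 i j k l]
      simp_rw [this]
    simp_rw [h3, mul_add, Finset.sum_add_distrib]
    have t1 : ∑ i, ∑ j, ∑ k, ∑ l, (M i j * M k l) * ((if i = j then (1:ℝ) else 0) * (if k = l then 1 else 0)) = Matrix.trace M ^ 2 := by
      simp [Matrix.trace, sq, Finset.sum_mul_sum]
    have t2 : ∑ i, ∑ j, ∑ k, ∑ l, (M i j * M k l) * ((if i = k then (1:ℝ) else 0) * (if j = l then 1 else 0)) = Matrix.trace (M * M) := by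
      simp only [Matrix.trace, Matrix.mul_apply, Matrix.diag_apply]
      simp
      exact Finset.sum_congr rfl fun i _ => Finset.sum_congr rfl fun j _ => by rw [hM j i]
    have t3 : ∑ i, ∑ j, ∑ k, ∑ l, (M i j * M k l) * ((if i = l then (1:ℝ) else 0) * (if j = k then 1 else 0)) = Matrix.trace (M * M) := by
      simp only [Matrix.trace, Matrix.mul_apply, Matrix.diag_apply]
      simp
    rw [t1, t2, t3]; ring
  rw [E2, E4]
  simp; ring

lemma fderiv_sum_single {d : ℕ} (A : (Fin d → ℝ) →L[ℝ] ℝ) (z : Fin d → ℝ) :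
    A z = ∑ i, A (Pi.single i 1) * z i := by
  conv_lhs => rw [pi_eq_sum_univ' z]
  rw [map_sum]
  refine Finset.sum_congr rfl fun i _ => ?_
  rw [map_smul, smul_eq_mul, mul_comm]
  

lemma hess_eq {d : ℕ} {L : (Fin d → ℝ) → ℝ} (hL : ContDiff ℝ 2 L) (x : Fin d → ℝ) (i j : Fin d) :
    hessian L x i j = fderiv ℝ (fderiv ℝ L) x (Pi.single i 1) (Pi.single j 1) := by
  have h1 : Differentiable ℝ (fderiv ℝ L) :=
    (hL.fderiv_right (m := 1) (by norm_num)).differentiable (by norm_num)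
  unfold hessian
  have := ((h1 x).hasFDerivAt.clm_apply (hasFDerivAt_const (Pi.single j (1:ℝ) : Fin d → ℝ) x)).fderiv
  rw [this]
  simp

lemma hess_symm {d : ℕ} {L : (Fin d → ℝ) → ℝ} (hL : ContDiff ℝ 2 L) (x : Fin d → ℝ) (i j : Fin d) :
    hessian L x i j = hessian L x j i := by
  rw [hess_eq hL, hess_eq hL]
  exact (hL.contDiffAt.isSymmSndFDerivAt (by simp)) _ _

lemma hess_cont {d : ℕ} {L : (Fin d → ℝ) → ℝ} (hL : ContDiff ℝ 2 L) (i j : Fin d) :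
    Continuous (fun x => hessian L x i j) := by
  simp_rw [hess_eq hL]
  have h1 : ContDiff ℝ 1 (fderiv ℝ L) := hL.fderiv_right (m := 1) (by norm_num)
  have h2 : Continuous (fderiv ℝ (fderiv ℝ L)) := h1.continuous_fderiv (by norm_num)
  fun_prop

lemma grad_cont {d : ℕ} {L : (Fin d → ℝ) → ℝ} (hL : ContDiff ℝ 2 L) (i : Fin d) :
    Continuous (fun x => fderiv ℝ L x (Pi.single i 1)) := by
  have h2 : Continuous (fderiv ℝ L) := hL.continuous_fderiv (by norm_num)
  fun_prop

lemma quad_eq {d : ℕ} {L : (Fin d → ℝ) → ℝ} (hL : ContDiff ℝ 2 L) (x z : Fin d → ℝ) :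
    fderiv ℝ (fderiv ℝ L) x z z = ∑ i, ∑ j, z i * hessian L x i j * z j := by
  have h1 : fderiv ℝ (fderiv ℝ L) x z z
      = ∑ i, (fderiv ℝ (fderiv ℝ L) x (Pi.single i 1) z) * z i :=
    fderiv_sum_single ((fderiv ℝ (fderiv ℝ L) x).flip z) z
  rw [h1]
  refine Finset.sum_congr rfl fun i _ => ?_
  rw [fderiv_sum_single _ z, Finset.sum_mul]
  refine Finset.sum_congr rfl fun j _ => ?_
  rw [hess_eq hL]; ring

lemma taylor2 {d : ℕ} {L : (Fin d → ℝ) → ℝ} (hL : ContDiff ℝ 2 L) (x z : Fin d → ℝ) (c : ℝ) :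
    ∃ t ∈ Set.Ioo (0:ℝ) 1, L (x + c • z) - L x
      = c * (∑ i, fderiv ℝ L x (Pi.single i 1) * z i)
        + c ^ 2 / 2 * ∑ i, ∑ j, z i * hessian L (x + (t * c) • z) i j * z j := by
  have hd1 : Differentiable ℝ (fderiv ℝ L) :=
    (hL.fderiv_right (m := 1) (by norm_num)).differentiable (by norm_num)
  have hd0 : Differentiable ℝ L := hL.differentiable (by norm_num)
  have hline : ∀ t : ℝ, HasDerivAt (fun t : ℝ => x + (t * c) • z) (c • z) t := by
    intro t
    have := (((hasDerivAt_id t).mul_const c).smul_const z).const_add x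
    simpa using this
  have hφ : ∀ t : ℝ, HasDerivAt (fun t : ℝ => L (x + (t * c) • z))
      (c * fderiv ℝ L (x + (t * c) • z) z) t := by
    intro t
    have := (hd0 (x + (t * c) • z)).hasFDerivAt.comp_hasDerivAt t (hline t)
    refine this.congr_deriv ?_
    simp
  have hφ' : ∀ t : ℝ, HasDerivAt (fun t : ℝ => c * fderiv ℝ L (x + (t * c) • z) z)
      (c * (c * fderiv ℝ (fderiv ℝ L) (x + (t * c) • z) z z)) t := by
    intro t
    have h1 : HasDerivAt (fun t : ℝ => fderiv ℝ L (x + (t * c) • z))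
      (fderiv ℝ (fderiv ℝ L) (x + (t * c) • z) (c • z)) t :=
      (hd1 (x + (t * c) • z)).hasFDerivAt.comp_hasDerivAt t (hline t)
    have h2 : HasDerivAt (fun t : ℝ => fderiv ℝ L (x + (t * c) • z) z)
      (fderiv ℝ (fderiv ℝ L) (x + (t * c) • z) (c • z) z) t :=
      (ContinuousLinearMap.apply ℝ ℝ z).hasFDerivAt.comp_hasDerivAt t h1
    refine (h2.const_mul c).congr_deriv ?_
    rw [map_smul]
    rfl
  set K := L (x + c • z) - L x - c * fderiv ℝ L x z with hK
  have hh : ∀ t : ℝ, HasDerivAt (fun t : ℝ => L (x + c • z) - L (x + (t * c) • z)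
      - (c * fderiv ℝ L (x + (t * c) • z) z) * (1 - t) - K * (1 - t) ^ 2)
      ((1 - t) * (2 * K - (c * (c * fderiv ℝ (fderiv ℝ L) (x + (t * c) • z) z z)))) t := by
    intro t
    have h1t : HasDerivAt (fun t : ℝ => 1 - t) (-1) t := by
      simpa using (hasDerivAt_id t).const_sub 1
    have := (((hφ t).const_sub (L (x + c • z))).sub ((hφ' t).mul h1t)).sub ((h1t.pow 2).const_mul K)
    refine this.congr_deriv ?_
    simp; ring
  obtain ⟨t, ht, h0⟩ := exists_hasDerivAt_eq_zero (a := (0:ℝ)) (b := 1) one_pos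
    (fun t _ => (hh t).continuousAt.continuousWithinAt) (by simp [hK]) (fun t _ => hh t)
  refine ⟨t, ht, ?_⟩
  have h1 : 1 - t ≠ 0 := by have := ht.2; linarith
  have h2 := (mul_eq_zero.1 h0).resolve_left h1
  rw [quad_eq hL] at h2
  rw [fderiv_sum_single _ z] at hK
  linarith

lemma le_sup_Ioo {f : ℝ → ℝ} (hf : Continuous f) {t : ℝ}
    (ht : t ∈ Set.Ioo (0:ℝ) 1) : f t ≤ ⨆ t ∈ Set.Ioo (0:ℝ) 1, f t := by
  obtain ⟨C, hC⟩ := isCompact_Icc (a := (0:ℝ)) (b := 1) |>.bddAbove_image hf.continuousOn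
  have hb : BddAbove (Set.range fun t => ⨆ (_ : t ∈ Set.Ioo (0:ℝ) 1), f t) := by
    refine ⟨max C 0, ?_⟩
    rintro _ ⟨u, rfl⟩
    by_cases hu : u ∈ Set.Ioo (0:ℝ) 1
    · simp only [hu, ciSup_const]
      exact le_max_of_le_left (hC ⟨u, Set.Ioo_subset_Icc_self hu, rfl⟩)
    · simp [hu]
  refine le_ciSup_of_le hb t ?_
  simp only [ht, ciSup_const]; rfl

lemma g_lip (a b : ℝ) : |min 1 (rexp a) - min 1 (rexp b)| ≤ |a - b| := by
  have key : ∀ a b : ℝ, a ≤ b → |min 1 (rexp a) - min 1 (rexp b)| ≤ |a - b| := by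
    intro a b hab
    have hm : min 1 (rexp a) ≤ min 1 (rexp b) := min_le_min_left _ (Real.exp_le_exp.2 hab)
    rw [abs_of_nonpos (by linarith), abs_of_nonpos (by linarith)]
    rcases le_total 0 a with h | h
    · have h1 : 1 ≤ rexp a := Real.one_le_exp h
      have := min_le_left 1 (rexp b)
      rw [min_eq_left h1]; linarith
    · rw [min_eq_right (Real.exp_le_one_iff.2 h)]
      rcases le_total 0 b with h' | h'
      · have := min_le_left 1 (rexp b)
        have := Real.add_one_le_exp a
        linarith
      · have h1 := min_le_right 1 (rexp b)
        have h2 : rexp a = rexp b * rexp (a - b) := by rw [← Real.exp_add]; ring_nf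
        have h3 := Real.add_one_le_exp (a - b)
        have h4 := Real.exp_le_one_iff.2 h'
        have h5 := Real.exp_pos b
        have h6 : rexp b * (1 - rexp (a - b)) ≤ 1 * (b - a) := by
          apply mul_le_mul h4 (by linarith) _ (by norm_num)
          have := Real.exp_le_one_iff.2 (show a - b ≤ 0 by linarith)
          linarith
        nlinarith
  rcases le_total a b with h | h
  · exact key a b h
  · rw [abs_sub_comm, abs_sub_comm a b]; exact key b a h

lemma approx_int {Ω : Type*} [MeasurableSpace Ω] (μ : Measure Ω) [IsProbabilityMeasure μ]
    {f g : Ω → ℝ} (hf : AEStronglyMeasurable f μ) (hg : AEStronglyMeasurable g μ)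
    (hf01 : ∀ x, f x ∈ Set.Icc (0:ℝ) 1) (hg01 : ∀ x, g x ∈ Set.Icc (0:ℝ) 1) {ε : ℝ} (hε : 0 ≤ ε)
    (S : Set Ω) (hS : ∀ x ∉ S, |f x - g x| ≤ ε) :
    |∫ x, f x ∂μ - ∫ x, g x ∂μ| ≤ ε + (μ S).toReal := by
  have hfi : Integrable f μ := Integrable.of_bound hf 1
    (ae_of_all _ fun x => by rw [Real.norm_eq_abs, abs_of_nonneg (hf01 x).1]; exact (hf01 x).2)
  have hgi : Integrable g μ := Integrable.of_bound hg 1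
    (ae_of_all _ fun x => by rw [Real.norm_eq_abs, abs_of_nonneg (hg01 x).1]; exact (hg01 x).2)
  rw [← integral_sub hfi hgi]
  have hT : MeasurableSet (toMeasurable μ S) := measurableSet_toMeasurable μ S
  have hI : Integrable ((toMeasurable μ S).indicator (fun _ => (1:ℝ))) μ :=
    (integrable_const 1).indicator hT
  calc |∫ x, (f x - g x) ∂μ| ≤ ∫ x, |f x - g x| ∂μ := abs_integral_le_integral_abs
    _ ≤ ∫ x, (ε + (toMeasurable μ S).indicator (fun _ => (1:ℝ)) x) ∂μ := by
        refine integral_mono (hfi.sub hgi).abs ((integrable_const ε).add hI) fun x => ?_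
        by_cases hx : x ∈ toMeasurable μ S
        · simp only [Set.indicator_of_mem hx]
          have h1 := hf01 x; have h2 := hg01 x
          have : |f x - g x| ≤ 1 := by
            rw [abs_le]; exact ⟨by linarith [h1.1, h2.2], by linarith [h1.2, h2.1]⟩
          linarith
        · simp only [Set.indicator_of_notMem hx, add_zero]
          exact hS x fun h => hx (subset_toMeasurable μ S h)
    _ = ε + (μ S).toReal := by
        rw [integral_add (integrable_const ε) hI, integral_indicator hT]
        simp [Measure.real]

lemma phi_eq (t : ℝ) : gaussianPDFReal 0 1 t = rexp (-t ^ 2 / 2) / Real.sqrt (2 * Real.pi) := by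
  simp [gaussianPDFReal, div_eq_inv_mul]

lemma Phi_eq (x : ℝ) : stdNormalCDF x = ∫ t in Set.Iic x, gaussianPDFReal 0 1 t := by
  simp_rw [phi_eq]; rfl

lemma Phi_mono : Monotone stdNormalCDF := by
  intro x y h
  rw [Phi_eq, Phi_eq]
  exact setIntegral_mono_set (integrable_gaussianPDFReal 0 1).integrableOn
    (ae_of_all _ fun t => gaussianPDFReal_nonneg 0 1 t) (Set.Iic_subset_Iic.2 h).eventuallyLE

lemma Phi_01 (x : ℝ) : stdNormalCDF x ∈ Set.Icc (0:ℝ) 1 := by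
  rw [Phi_eq]
  refine ⟨integral_nonneg fun t => gaussianPDFReal_nonneg 0 1 t, ?_⟩
  rw [← integral_gaussianPDFReal_eq_one 0 (one_ne_zero : (1:NNReal) ≠ 0)]
  exact setIntegral_le_integral (integrable_gaussianPDFReal 0 1)
    (ae_of_all _ fun t => gaussianPDFReal_nonneg 0 1 t)

lemma g_gauss (ℓ : ℝ) (hℓ : 0 < ℓ) (b : ℝ) :
    ∫ u, min 1 (rexp (ℓ * u - ℓ ^ 2 / 2 + b)) ∂gaussianReal 0 1
      = stdNormalCDF (b / ℓ - ℓ / 2) + rexp b * stdNormalCDF (-b / ℓ - ℓ / 2) := by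
  rw [integral_gaussianReal_eq_integral_smul one_ne_zero]
  simp only [smul_eq_mul]
  have hI : Integrable (fun u => gaussianPDFReal 0 1 u * min 1 (rexp (ℓ * u - ℓ ^ 2 / 2 + b))) := by
    refine (integrable_gaussianPDFReal 0 1).mono' (by
      apply AEStronglyMeasurable.mul (integrable_gaussianPDFReal 0 1).1
      exact Continuous.aestronglyMeasurable (by fun_prop)) (ae_of_all _ fun u => ?_)
    rw [norm_mul, Real.norm_of_nonneg (gaussianPDFReal_nonneg 0 1 u),
      Real.norm_of_nonneg (le_min zero_le_one (Real.exp_pos _).le)]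
    exact mul_le_of_le_one_right (gaussianPDFReal_nonneg 0 1 u) (min_le_left _ _)
  rw [← intervalIntegral.integral_Iic_add_Ioi (b := -(b / ℓ - ℓ / 2)) hI.integrableOn hI.integrableOn, add_comm]
  congr 1
  · rw [Phi_eq]
    have h1 : ∀ t, gaussianPDFReal 0 1 t = gaussianPDFReal 0 1 (-t) := fun t => by simp [phi_eq]
    rw [setIntegral_congr_fun measurableSet_Iic (fun t _ => h1 t),
      integral_comp_neg_Iic (f := gaussianPDFReal 0 1)]
    refine setIntegral_congr_fun measurableSet_Ioi fun u hu => ?_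
    have hu' : -(b / ℓ - ℓ / 2) < u := hu
    have : 0 ≤ ℓ * u - ℓ ^ 2 / 2 + b := by
      have h := mul_lt_mul_of_pos_left hu' hℓ
      have h2 : ℓ * -(b / ℓ - ℓ / 2) = -b + ℓ ^ 2 / 2 := by field_simp; ring
      linarith
    rw [min_eq_left (Real.one_le_exp this), mul_one]
  · rw [Phi_eq, ← integral_const_mul]
    have hp : (fun u : ℝ => u - ℓ) ⁻¹' (Set.Iic (-b / ℓ - ℓ / 2)) = Set.Iic (-(b / ℓ - ℓ / 2)) := by
      ext u
      simp only [Set.mem_preimage, Set.mem_Iic]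
      constructor <;> intro h <;> ring_nf at h ⊢ <;> linarith
    have hs := (measurePreserving_sub_right volume ℓ).setIntegral_preimage_emb
      (MeasurableEquiv.subRight ℓ).measurableEmbedding
      (fun a => rexp b * gaussianPDFReal 0 1 a) (Set.Iic (-b / ℓ - ℓ / 2))
    rw [hp] at hs
    rw [← hs]
    refine setIntegral_congr_fun measurableSet_Iic fun u hu => ?_
    have hu' : u ≤ -(b / ℓ - ℓ / 2) := hu
    have : ℓ * u - ℓ ^ 2 / 2 + b ≤ 0 := by
      have h := mul_le_mul_of_nonneg_left hu' hℓ.le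
      have h2 : ℓ * -(b / ℓ - ℓ / 2) = -b + ℓ ^ 2 / 2 := by field_simp; ring
      linarith
    simp only [phi_eq]
    rw [min_eq_right (Real.exp_le_one_iff.2 this), div_mul_eq_mul_div, mul_div_assoc', ← Real.exp_add,
      ← Real.exp_add]
    congr 2; ring

lemma final_int (ρ : ℝ → ℝ) (hρ_meas : Measurable ρ) (hρ_nonneg : ∀ b, 0 ≤ ρ b)
    (μB : Measure ℝ)
    (hμB : μB = volume.withDensity fun b => ENNReal.ofReal (ρ b))
    (hμB_prob : IsProbabilityMeasure μB)
    (hρ_sym : ∀ b, ρ b = Real.exp (-b) * ρ (-b)) (ℓ : ℝ) (hℓ : 0 < ℓ) :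
    ∫ u, (∫ b, min 1 (rexp (ℓ * u - ℓ ^ 2 / 2 + b)) ∂μB) ∂gaussianReal 0 1
      = 2 * ∫ b, stdNormalCDF (b / ℓ - ℓ / 2) ∂μB := by
  have hI : Integrable (fun p : ℝ × ℝ => min 1 (rexp (ℓ * p.1 - ℓ ^ 2 / 2 + p.2)))
      ((gaussianReal 0 1).prod μB) := by
    refine Integrable.of_bound (Continuous.aestronglyMeasurable (by fun_prop)) 1
      (ae_of_all _ fun p => ?_)
    rw [Real.norm_of_nonneg (le_min zero_le_one (Real.exp_pos _).le)]
    exact min_le_left _ _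
  rw [integral_integral_swap (f := fun u b => min 1 (rexp (ℓ * u - ℓ ^ 2 / 2 + b))) hI]
  have hJ := hI.integral_prod_right
  simp only [g_gauss ℓ hℓ] at hJ ⊢
  have hP : Integrable (fun b => stdNormalCDF (b / ℓ - ℓ / 2)) μB := by
    refine Integrable.of_bound
      (Phi_mono.measurable.comp (by fun_prop)).aestronglyMeasurable 1 (ae_of_all _ fun b => ?_)
    have h := Phi_01 (b / ℓ - ℓ / 2)
    exact (Real.norm_of_nonneg h.1).le.trans h.2
  have hQ : Integrable (fun b => rexp b * stdNormalCDF (-b / ℓ - ℓ / 2)) μB := by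
    refine (hJ.sub hP).congr (ae_of_all _ fun b => ?_)
    simp
  rw [integral_add hP hQ, two_mul]
  congr 1
  have hw : ∀ f : ℝ → ℝ, ∫ b, f b ∂μB = ∫ b, ρ b * f b := by
    intro f
    rw [hμB, integral_withDensity_eq_integral_toReal_smul (by fun_prop) (by simp)]
    refine integral_congr_ae (ae_of_all _ fun b => ?_)
    simp [hρ_nonneg b]
  rw [hw, hw, ← integral_neg_eq_self]
  refine integral_congr_ae (ae_of_all _ fun b => ?_)
  simp only [neg_neg]
  rw [hρ_sym b]; ring

lemma cont_of_lip {h : ℝ → ℝ} (C : ℝ) (hlip : ∀ a b, |h a - h b| ≤ C * |a - b|) : Continuous h :=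
  (LipschitzWith.of_dist_le' (K := C) fun a b => by
    simpa [Real.dist_eq] using hlip a b).continuous

lemma K_lip {h : ℝ → ℝ} (hlip : ∀ a b, |h a - h b| ≤ |a - b|) (h01 : ∀ a, h a ∈ Set.Icc (0:ℝ) 1)
    (c τ τ' : ℝ) :
    |∫ u, h (τ * u - c) ∂gaussianReal 0 1 - ∫ u, h (τ' * u - c) ∂gaussianReal 0 1| ≤ |τ - τ'| := by
  have hc : Continuous h := cont_of_lip 1 (by simpa using hlip)
  have hi : ∀ τ : ℝ, Integrable (fun u => h (τ * u - c)) (gaussianReal 0 1) := fun τ =>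
    Integrable.of_bound (Continuous.aestronglyMeasurable (by fun_prop)) 1 (ae_of_all _ fun u =>
      (Real.norm_of_nonneg (h01 _).1).le.trans (h01 _).2)
  obtain ⟨hm, -, h2, -, -⟩ := gm_moments
  have hm1 : Integrable (fun u : ℝ => u) (gaussianReal 0 1) := by simpa using hm 1
  rw [← integral_sub (hi τ) (hi τ')]
  calc _ ≤ ∫ u, |h (τ * u - c) - h (τ' * u - c)| ∂gaussianReal 0 1 := abs_integral_le_integral_abs
    _ ≤ ∫ u, |τ - τ'| * ((u ^ 2 + 1) / 2) ∂gaussianReal 0 1 := by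
        refine integral_mono ((hi τ).sub (hi τ')).abs
          ((((hm 2).add (integrable_const 1)).div_const 2).const_mul _) fun u => ?_
        refine (hlip _ _).trans ?_
        have e : τ * u - c - (τ' * u - c) = (τ - τ') * u := by ring
        rw [e, abs_mul]
        refine mul_le_mul_of_nonneg_left ?_ (abs_nonneg _)
        have := sq_nonneg (|u| - 1)
        have := sq_abs u
        nlinarith
    _ = |τ - τ'| := by
        rw [integral_const_mul, integral_div, integral_add (hm 2) (integrable_const 1), h2]
        simp

lemma quad_tail {d : ℕ} {L : (Fin d → ℝ) → ℝ} (hL : ContDiff ℝ 2 L) (μX : Measure (Fin d → ℝ))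
    [IsProbabilityMeasure μX] {s ε δ : ℝ} (hs : 0 < s) (hε : 0 < ε) (hδ : 0 < δ) :
    (μX.prod (_root_.stdGaussian d)) {p | ε < |(∑ i, ∑ j, p.2 i * hessian L p.1 i j * p.2 j
        - Matrix.trace (hessian L p.1)) / s ^ 2|}
      ≤ μX {x | δ < |Matrix.trace (hessian L x * hessian L x) / s ^ 4|}
        + ENNReal.ofReal (2 * δ / ε ^ 2) := by
  have hH := hess_cont hL
  have hcq : Continuous (fun p : (Fin d → ℝ) × (Fin d → ℝ) =>
      |(∑ i, ∑ j, p.2 i * hessian L p.1 i j * p.2 j - Matrix.trace (hessian L p.1)) / s ^ 2|) := by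
    have h1 : Continuous (fun p : (Fin d → ℝ) × (Fin d → ℝ) =>
      ∑ i, ∑ j, p.2 i * hessian L p.1 i j * p.2 j) :=
      continuous_finsetSum _ fun i _ => continuous_finsetSum _ fun j _ =>
        (((continuous_apply i).comp continuous_snd).mul ((hH i j).comp continuous_fst)).mul
          ((continuous_apply j).comp continuous_snd)
    have h2 : Continuous (fun p : (Fin d → ℝ) × (Fin d → ℝ) => Matrix.trace (hessian L p.1)) :=
      continuous_finsetSum _ fun i _ => (hH i i).comp continuous_fst
    exact ((h1.sub h2).div_const _).abs
  have hct : Continuous (fun x => |Matrix.trace (hessian L x * hessian L x) / s ^ 4|) := by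
    have h2 : Continuous (fun x => Matrix.trace (hessian L x * hessian L x)) := by
      simp only [Matrix.trace, Matrix.diag_apply, Matrix.mul_apply]
      exact continuous_finsetSum _ fun i _ => continuous_finsetSum _ fun j _ => (hH i j).mul (hH j i)
    exact (h2.div_const _).abs
  have hQ := measurableSet_lt (measurable_const (a := ε)) hcq.measurable
  have hT := measurableSet_lt (measurable_const (a := δ)) hct.measurable
  rw [Measure.prod_apply hQ]
  set T := {x | δ < |Matrix.trace (hessian L x * hessian L x) / s ^ 4|} with hTdef
  calc _ ≤ ∫⁻ x, (T.indicator (fun _ => 1) x + ENNReal.ofReal (2 * δ / ε ^ 2)) ∂μX := by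
        refine lintegral_mono fun x => ?_
        by_cases hx : x ∈ T
        · rw [Set.indicator_of_mem hx]
          exact prob_le_one.trans le_self_add
        · rw [Set.indicator_of_notMem hx, zero_add]
          have hx' : |Matrix.trace (hessian L x * hessian L x) / s ^ 4| ≤ δ := not_lt.1 hx
          obtain ⟨hI, hv⟩ := quad_var (hessian L x) (hess_symm hL x)
          have hmk := mul_meas_ge_le_integral_of_nonneg
            (ae_of_all _ fun z => sq_nonneg _) hI ((ε * s ^ 2) ^ 2)
          rw [hv] at hmk
          have hpos : 0 < (ε * s ^ 2) ^ 2 := by positivity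
          have hle : 2 * Matrix.trace (hessian L x * hessian L x) ≤ (ε * s ^ 2) ^ 2 * (2 * δ / ε ^ 2) := by
            have h1 := (le_abs_self _).trans hx'
            rw [div_le_iff₀ (by positivity)] at h1
            have : (ε * s ^ 2) ^ 2 * (2 * δ / ε ^ 2) = 2 * (δ * s ^ 4) := by
              field_simp
            linarith
          have h3 := le_of_mul_le_mul_left (hmk.trans hle) hpos
          rw [Measure.real] at h3
          have h4 := (ENNReal.le_ofReal_iff_toReal_le (measure_ne_top _ _) (by positivity)).2 h3
          refine le_trans (measure_mono ?_) h4
          intro z hz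
          have hz' : ε < |(∑ i, ∑ j, z i * hessian L x i j * z j
            - Matrix.trace (hessian L x)) / s ^ 2| := hz
          rw [abs_div, abs_of_pos (by positivity : 0 < s ^ 2), lt_div_iff₀ (by positivity)] at hz'
          show (ε * s ^ 2) ^ 2 ≤ _
          rw [← sq_abs (∑ i, ∑ j, z i * hessian L x i j * z j - _)]
          exact pow_le_pow_left₀ (by positivity) hz'.le 2
    _ = _ := by
        rw [lintegral_add_right _ measurable_const, lintegral_indicator hT]
        simp

lemma core_bound {d : ℕ} {L : (Fin d → ℝ) → ℝ} (hL : ContDiff ℝ 2 L) (μX : Measure (Fin d → ℝ))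
    [IsProbabilityMeasure μX] {s ε ℓ : ℝ} (hs : 0 < s) (hε : 0 < ε) (hℓ : 0 < ℓ)
    {h : ℝ → ℝ} (hlip : ∀ a b, |h a - h b| ≤ |a - b|) (h01 : ∀ a, h a ∈ Set.Icc (0:ℝ) 1) :
    |∫ p : (Fin d → ℝ) × (Fin d → ℝ), h (L (p.1 + (ℓ / s) • p.2) - L p.1)
        ∂(μX.prod (_root_.stdGaussian d)) - ∫ u, h (ℓ * u - ℓ ^ 2 / 2) ∂gaussianReal 0 1|
    ≤ (ℓ ^ 2 / 2 * (3 * ε) + ℓ * ε) +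
      (((μX.prod (_root_.stdGaussian d)) {p | ε < |(∑ i, ∑ j, p.2 i * hessian L p.1 i j * p.2 j
        - Matrix.trace (hessian L p.1)) / s ^ 2|}).toReal
      + (μX {x | ε < |Matrix.trace (hessian L x) / s ^ 2 + 1|}).toReal
      + ((μX.prod (_root_.stdGaussian d)) {p | ε < ⨆ t ∈ Set.Ioo (0 : ℝ) 1,
        |(∑ i, ∑ j, p.2 i *
            ((hessian L (p.1 + (t * ℓ / s) • p.2) - hessian L p.1) i j) * p.2 j)
          / s ^ 2|}).toReal
      + (μX {x | ε < |Real.sqrt (gradNormSq L x) / s - 1|}).toReal) := by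
  have hc : Continuous h := cont_of_lip 1 (by simpa using hlip)
  have hH := hess_cont hL
  have hG := grad_cont hL
  have hLc : Continuous L := hL.continuous
  set A := {p : (Fin d → ℝ) × (Fin d → ℝ) | ε < |(∑ i, ∑ j, p.2 i * hessian L p.1 i j * p.2 j
        - Matrix.trace (hessian L p.1)) / s ^ 2|} with hA
  set B := {x | ε < |Matrix.trace (hessian L x) / s ^ 2 + 1|} with hB
  set C := {p : (Fin d → ℝ) × (Fin d → ℝ) | ε < ⨆ t ∈ Set.Ioo (0 : ℝ) 1,
        |(∑ i, ∑ j, p.2 i *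
            ((hessian L (p.1 + (t * ℓ / s) • p.2) - hessian L p.1) i j) * p.2 j)
          / s ^ 2|} with hC
  set D := {x | ε < |Real.sqrt (gradNormSq L x) / s - 1|} with hD
  set P := μX.prod (_root_.stdGaussian d) with hP
  have hlinc : Continuous (fun p : (Fin d → ℝ) × (Fin d → ℝ) =>
      ∑ i, fderiv ℝ L p.1 (Pi.single i 1) * p.2 i) :=
    continuous_finsetSum _ fun i _ => ((hG i).comp continuous_fst).mul
      ((continuous_apply i).comp continuous_snd)
  have step1 : |∫ p, h (L (p.1 + (ℓ / s) • p.2) - L p.1) ∂P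
      - ∫ p, h (ℓ / s * (∑ i, fderiv ℝ L p.1 (Pi.single i 1) * p.2 i) - ℓ ^ 2 / 2) ∂P|
      ≤ ℓ ^ 2 / 2 * (3 * ε) + (P (A ∪ B ×ˢ Set.univ ∪ C)).toReal := by
    refine approx_int P (Continuous.aestronglyMeasurable (by fun_prop))
      (Continuous.aestronglyMeasurable (by fun_prop)) (fun _ => h01 _) (fun _ => h01 _)
      (by positivity) _ fun p hp => ?_
    simp only [Set.mem_union, not_or] at hp
    obtain ⟨⟨hpA, hpB⟩, hpC⟩ := hp
    have hpA' : |(∑ i, ∑ j, p.2 i * hessian L p.1 i j * p.2 j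
        - Matrix.trace (hessian L p.1)) / s ^ 2| ≤ ε := not_lt.1 hpA
    have hpB' : |Matrix.trace (hessian L p.1) / s ^ 2 + 1| ≤ ε :=
      not_lt.1 fun hh => hpB ⟨hh, trivial⟩
    have hpC' : (⨆ t ∈ Set.Ioo (0 : ℝ) 1,
        |(∑ i, ∑ j, p.2 i *
            ((hessian L (p.1 + (t * ℓ / s) • p.2) - hessian L p.1) i j) * p.2 j)
          / s ^ 2|) ≤ ε := not_lt.1 hpC
    refine (hlip _ _).trans ?_
    obtain ⟨t, ht, heq⟩ := taylor2 hL p.1 p.2 (ℓ / s)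
    have hcs : Continuous (fun t : ℝ => |(∑ i, ∑ j, p.2 i *
            ((hessian L (p.1 + (t * ℓ / s) • p.2) - hessian L p.1) i j) * p.2 j) / s ^ 2|) := by
      refine Continuous.abs (Continuous.div_const (continuous_finsetSum _ fun i _ =>
        continuous_finsetSum _ fun j _ => Continuous.mul (Continuous.mul continuous_const ?_) continuous_const) _)
      simp only [Matrix.sub_apply]
      exact ((hH i j).comp (by fun_prop)).sub continuous_const
    have hst := (le_sup_Ioo hcs ht).trans hpC'
    rw [heq]
    have hsplit : (∑ i, ∑ j, p.2 i *
            ((hessian L (p.1 + (t * ℓ / s) • p.2) - hessian L p.1) i j) * p.2 j)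
        = (∑ i, ∑ j, p.2 i * hessian L (p.1 + (t * (ℓ / s)) • p.2) i j * p.2 j)
          - ∑ i, ∑ j, p.2 i * hessian L p.1 i j * p.2 j := by
      rw [mul_div_assoc, ← Finset.sum_sub_distrib]
      refine Finset.sum_congr rfl fun i _ => ?_
      rw [← Finset.sum_sub_distrib]
      refine Finset.sum_congr rfl fun j _ => ?_
      rw [Matrix.sub_apply]; ring
    rw [hsplit] at hst
    set q1 := ∑ i, ∑ j, p.2 i * hessian L (p.1 + (t * (ℓ / s)) • p.2) i j * p.2 j
    set q0 := ∑ i, ∑ j, p.2 i * hessian L p.1 i j * p.2 j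
    set tr := Matrix.trace (hessian L p.1)
    set lin := ∑ i, fderiv ℝ L p.1 (Pi.single i 1) * p.2 i
    have e : ℓ / s * lin + (ℓ / s) ^ 2 / 2 * q1 - (ℓ / s * lin - ℓ ^ 2 / 2)
        = ℓ ^ 2 / 2 * ((q1 - q0) / s ^ 2 + (q0 - tr) / s ^ 2 + (tr / s ^ 2 + 1)) := by
      field_simp; ring
    rw [e, abs_mul, abs_of_nonneg (by positivity : 0 ≤ ℓ ^ 2 / 2)]
    refine mul_le_mul_of_nonneg_left ?_ (by positivity)
    refine (abs_add_three _ _ _).trans ?_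
    linarith
  have hU : (P (A ∪ B ×ˢ Set.univ ∪ C)).toReal ≤ (P A).toReal + (μX B).toReal + (P C).toReal := by
    have hBu : P (B ×ˢ Set.univ) = μX B := by rw [hP, Measure.prod_prod]; simp
    rw [← ENNReal.toReal_add (measure_ne_top _ _) (measure_ne_top _ _),
      ← ENNReal.toReal_add (by finiteness) (measure_ne_top _ _)]
    refine ENNReal.toReal_mono (by finiteness) ?_
    refine (measure_union_le _ _).trans (add_le_add (( measure_union_le _ _).trans ?_) le_rfl)
    rw [hBu]
  have step2 : ∫ p, h (ℓ / s * (∑ i, fderiv ℝ L p.1 (Pi.single i 1) * p.2 i) - ℓ ^ 2 / 2) ∂P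
      = ∫ x, (∫ u, h ((ℓ * (Real.sqrt (gradNormSq L x) / s)) * u - ℓ ^ 2 / 2) ∂gaussianReal 0 1) ∂μX := by
    rw [hP, integral_prod]
    · refine integral_congr_ae (ae_of_all _ fun x => ?_)
      simp only []
      have hmeas : Measurable (fun z : Fin d → ℝ => ∑ i, fderiv ℝ L x (Pi.single i 1) * z i) :=
        (continuous_finsetSum _ fun i _ => continuous_const.mul (continuous_apply i)).measurable
      have h1 := integral_map (μ := _root_.stdGaussian d) hmeas.aemeasurable
        (f := fun w => h (ℓ / s * w - ℓ ^ 2 / 2)) (Continuous.aestronglyMeasurable (by fun_prop))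
      rw [← h1, std_map_lin, integral_map (by fun_prop) (Continuous.aestronglyMeasurable (by fun_prop))]
      refine integral_congr_ae (ae_of_all _ fun u => ?_)
      simp only [gradNormSq]
      congr 2
      ring
    · exact Integrable.of_bound (Continuous.aestronglyMeasurable (by fun_prop)) 1 (ae_of_all _ fun u =>
        (Real.norm_of_nonneg (h01 _).1).le.trans (h01 _).2)
  have hK01 : ∀ τ : ℝ, ∫ u, h (τ * u - ℓ ^ 2 / 2) ∂gaussianReal 0 1 ∈ Set.Icc (0:ℝ) 1 := by
    intro τ
    refine ⟨integral_nonneg fun u => (h01 _).1, ?_⟩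
    have hi : Integrable (fun u => h (τ * u - ℓ ^ 2 / 2)) (gaussianReal 0 1) :=
      Integrable.of_bound (Continuous.aestronglyMeasurable (by fun_prop)) 1 (ae_of_all _ fun u =>
      (Real.norm_of_nonneg (h01 _).1).le.trans (h01 _).2)
    calc _ ≤ ∫ u, (1:ℝ) ∂gaussianReal 0 1 := integral_mono hi (integrable_const 1) fun u => (h01 _).2
      _ = 1 := by simp
  have hKc : Continuous (fun τ : ℝ => ∫ u, h (τ * u - ℓ ^ 2 / 2) ∂gaussianReal 0 1) :=
    cont_of_lip 1 fun a b => by simpa using K_lip hlip h01 (ℓ ^ 2 / 2) a b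
  have hgn : Continuous (fun x => gradNormSq L x) := by
    unfold gradNormSq
    exact continuous_finsetSum _ fun i _ => (hG i).pow 2
  have step3 : |∫ x, (∫ u, h ((ℓ * (Real.sqrt (gradNormSq L x) / s)) * u - ℓ ^ 2 / 2) ∂gaussianReal 0 1) ∂μX
      - ∫ x, (∫ u, h (ℓ * u - ℓ ^ 2 / 2) ∂gaussianReal 0 1) ∂μX| ≤ ℓ * ε + (μX D).toReal := by
    refine approx_int μX ?_ aestronglyMeasurable_const (fun _ => hK01 _) (fun _ => hK01 _)
      (by positivity) _ fun x hx => ?_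
    · exact Continuous.aestronglyMeasurable
        (hKc.comp (continuous_const.mul ((Real.continuous_sqrt.comp hgn).div_const s)))
    · have hx' : |Real.sqrt (gradNormSq L x) / s - 1| ≤ ε := not_lt.1 hx
      refine (K_lip hlip h01 _ _ _).trans ?_
      have e : ℓ * (Real.sqrt (gradNormSq L x) / s) - ℓ = ℓ * (Real.sqrt (gradNormSq L x) / s - 1) := by ring
      rw [e, abs_mul, abs_of_pos hℓ]
      exact mul_le_mul_of_nonneg_left hx' hℓ.le
  rw [step2] at step1
  rw [integral_const (μ := μX)] at step3
  simp only [probReal_univ, one_smul] at step3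
  refine (abs_sub_le _ _ _).trans ((add_le_add step1 step3).trans ?_)
  linarith
/-- Theorem 1, part 1: limiting acceptance probability of the
pseudo-marginal random walk Metropolis.  Under conditions (i)–(iv) on the targets
`pden^(d)` with scalings `s^(d)`, with `λ^(d) = ℓ/s^(d)` and noise difference `B` whose
density satisfies `ρ(b) = e^{−b} ρ(−b)`, the mean acceptance probability
`E[min(1, exp(L^(d)(X + λZ) − L^(d)(X) + B))]` converges to `2 E[Φ(B/ℓ − ℓ/2)]`. -/
theorem stmt3
    (pden : (d : ℕ) → (Fin d → ℝ) → ℝ) (hπ_pos : ∀ d x, 0 < pden d x)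
    (L : (d : ℕ) → (Fin d → ℝ) → ℝ)
    (hL : ∀ d, L d = fun x => Real.log (pden d x))
    (hL_smooth : ∀ d, ContDiff ℝ 2 (L d))
    (μX : (d : ℕ) → Measure (Fin d → ℝ))
    (hμX : ∀ d, μX d = volume.withDensity fun x => ENNReal.ofReal (pden d x))
    (hμX_prob : ∀ d, IsProbabilityMeasure (μX d))
    (ρ : ℝ → ℝ) (hρ_meas : Measurable ρ) (hρ_nonneg : ∀ b, 0 ≤ ρ b)
    (μB : Measure ℝ)
    (hμB : μB = volume.withDensity fun b => ENNReal.ofReal (ρ b))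
    (hμB_prob : IsProbabilityMeasure μB)
    (hρ_sym : ∀ b, ρ b = Real.exp (-b) * ρ (-b))
    (s : ℕ → ℝ) (hs_pos : ∀ d, 0 < s d)
    -- (i) ‖∇L^(d)(X)‖ / s^(d) → 1 in probability
    (hgrad : ∀ ε > (0 : ℝ), Tendsto (fun d =>
      μX d {x | ε < |Real.sqrt (gradNormSq (L d) x) / s d - 1|}) atTop (𝓝 0))
    -- (ii) ΔL^(d)(X) / (s^(d))² → −1 in probability
    (hlap : ∀ ε > (0 : ℝ), Tendsto (fun d =>
      μX d {x | ε < |Matrix.trace (hessian (L d) x) / (s d) ^ 2 + 1|}) atTop (𝓝 0))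
    -- (iii) Trace[(H^(d)(X))²] / (s^(d))⁴ → 0 in probability
    (htrace : ∀ ε > (0 : ℝ), Tendsto (fun d =>
      μX d {x | ε < |Matrix.trace (hessian (L d) x * hessian (L d) x) / (s d) ^ 4|})
      atTop (𝓝 0))
    -- (iv) regularity of the Hessian
    (hhess_reg : ∀ σ > (0 : ℝ), ∀ ε > (0 : ℝ), Tendsto (fun d =>
      ((μX d).prod (stdGaussian d)) {p | ε < ⨆ t ∈ Set.Ioo (0 : ℝ) 1,
        |(∑ i, ∑ j, p.2 i *
            ((hessian (L d) (p.1 + (t * σ / s d) • p.2) - hessian (L d) p.1) i j) * p.2 j)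
          / (s d) ^ 2|}) atTop (𝓝 0))
    (ℓ : ℝ) (hℓ : 0 < ℓ) (lam : ℕ → ℝ) (hlam : ∀ d, lam d = ℓ / s d) :
    Tendsto (fun d => ∫ p : ((Fin d → ℝ) × (Fin d → ℝ)) × ℝ,
        min 1 (Real.exp (L d (p.1.1 + lam d • p.1.2) - L d p.1.1 + p.2))
        ∂(((μX d).prod (stdGaussian d)).prod μB))
      atTop (𝓝 (2 * ∫ b, stdNormalCDF (b / ℓ - ℓ / 2) ∂μB)) := by
  have h01g : ∀ w b : ℝ, min 1 (rexp (w + b)) ∈ Set.Icc (0:ℝ) 1 := fun w b =>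
    ⟨le_min zero_le_one (Real.exp_pos _).le, min_le_left _ _⟩
  have hint : ∀ w : ℝ, Integrable (fun b => min 1 (rexp (w + b))) μB := fun w =>
    Integrable.of_bound (Continuous.aestronglyMeasurable (by fun_prop)) 1 (ae_of_all _ fun b =>
      (Real.norm_of_nonneg (h01g w b).1).le.trans (h01g w b).2)
  obtain ⟨h, hh⟩ : ∃ h : ℝ → ℝ, h = fun w => ∫ b, min 1 (rexp (w + b)) ∂μB := ⟨_, rfl⟩
  have h01 : ∀ w, h w ∈ Set.Icc (0:ℝ) 1 := by
    intro w
    rw [hh]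
    refine ⟨integral_nonneg fun b => (h01g w b).1, ?_⟩
    calc _ ≤ ∫ b, (1:ℝ) ∂μB := integral_mono (hint w) (integrable_const 1) fun b => (h01g w b).2
      _ = 1 := by simp
  have hlip : ∀ a b, |h a - h b| ≤ |a - b| := by
    intro a b
    rw [hh]
    simp only
    rw [← integral_sub (hint a) (hint b)]
    calc _ ≤ ∫ y, |min 1 (rexp (a + y)) - min 1 (rexp (b + y))| ∂μB := abs_integral_le_integral_abs
      _ ≤ ∫ y, |a - b| ∂μB := by
          refine integral_mono ((hint a).sub (hint b)).abs (integrable_const _) fun y => ?_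
          refine (g_lip _ _).trans (le_of_eq ?_)
          congr 1; ring
      _ = |a - b| := by simp
  rw [← final_int ρ hρ_meas hρ_nonneg μB hμB hμB_prob hρ_sym ℓ hℓ]
  have hlim : ∫ u, (∫ b, min 1 (rexp (ℓ * u - ℓ ^ 2 / 2 + b)) ∂μB) ∂gaussianReal 0 1
      = ∫ u, h (ℓ * u - ℓ ^ 2 / 2) ∂gaussianReal 0 1 := by rw [hh]
  rw [hlim]
  have hF : ∀ d, ∫ p : ((Fin d → ℝ) × (Fin d → ℝ)) × ℝ,
        min 1 (Real.exp (L d (p.1.1 + lam d • p.1.2) - L d p.1.1 + p.2))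
        ∂(((μX d).prod (_root_.stdGaussian d)).prod μB)
      = ∫ p : (Fin d → ℝ) × (Fin d → ℝ), h (L d (p.1 + (ℓ / s d) • p.2) - L d p.1)
        ∂((μX d).prod (_root_.stdGaussian d)) := by
    intro d
    have hLc : Continuous (L d) := (hL_smooth d).continuous
    have := hμX_prob d
    rw [integral_prod, hh, hlam d]
    exact Integrable.of_bound (Continuous.aestronglyMeasurable (by fun_prop)) 1 (ae_of_all _ fun p =>
      (Real.norm_of_nonneg (h01g _ _).1).le.trans (h01g _ _).2)
  simp_rw [hF]
  have toR : ∀ f : ℕ → ENNReal, Tendsto f atTop (𝓝 0) →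
      Tendsto (fun d => (f d).toReal) atTop (𝓝 0) := fun f hf => by
    have h0 := (ENNReal.tendsto_toReal ENNReal.zero_ne_top).comp hf
    rw [ENNReal.toReal_zero] at h0
    exact h0
  have hquad : ∀ ε > (0:ℝ), Tendsto (fun d => ((μX d).prod (_root_.stdGaussian d))
      {p | ε < |(∑ i, ∑ j, p.2 i * hessian (L d) p.1 i j * p.2 j
        - Matrix.trace (hessian (L d) p.1)) / (s d) ^ 2|}) atTop (𝓝 0) := by
    intro ε hε
    rw [ENNReal.tendsto_nhds_zero]
    intro η hη
    obtain ⟨r, hr0, hrη⟩ : ∃ r : ℝ, 0 < r ∧ ENNReal.ofReal r ≤ η := by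
      rcases eq_or_ne η ⊤ with rfl | hne
      · exact ⟨1, one_pos, le_top⟩
      · exact ⟨η.toReal, ENNReal.toReal_pos hη.ne' hne, (ENNReal.ofReal_toReal hne).le⟩
    have hδ : 0 < r * ε ^ 2 / 4 := by positivity
    have hev := (ENNReal.tendsto_nhds_zero.1 (htrace _ hδ)) (ENNReal.ofReal (r / 2))
      (ENNReal.ofReal_pos.2 (by positivity))
    filter_upwards [hev] with d hd
    have := hμX_prob d
    refine (quad_tail (hL_smooth d) (μX d) (hs_pos d) hε hδ).trans ((add_le_add hd le_rfl).trans ?_)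
    rw [← ENNReal.ofReal_add (by positivity) (by positivity)]
    refine le_trans (le_of_eq ?_) hrη
    congr 1
    field_simp; ring
  rw [Metric.tendsto_nhds]
  intro η hη
  obtain ⟨ε, hε, hεη⟩ : ∃ ε > (0:ℝ), ℓ ^ 2 / 2 * (3 * ε) + ℓ * ε = η / 2 := by
    refine ⟨η / 2 / (ℓ ^ 2 / 2 * 3 + ℓ), by positivity, ?_⟩
    field_simp
  have hsum := (((toR _ (hquad ε hε)).add (toR _ (hlap ε hε))).add
    (toR _ (hhess_reg ℓ hℓ ε hε))).add (toR _ (hgrad ε hε))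
  simp only [add_zero] at hsum
  filter_upwards [hsum.eventually (gt_mem_nhds (half_pos hη))] with d hd
  have := hμX_prob d
  rw [Real.dist_eq]
  refine (core_bound (hL_smooth d) (μX d) (hs_pos d) hε hℓ hlip h01).trans_lt ?_
  rw [hεη]
  linarith
end

section
/- (Derivative of the limiting acceptance rate.) Let B be a real random variable with Lebesgue density ρ satisfying ρ(b) = e^{−b} ρ(−b), write h(b) = e^{b/2} ρ(b) (so h is even), and define α(ℓ) = 2 · E[Φ(B/ℓ − ℓ/2)] for ℓ > 0. Then α is differentiable on (0,∞) with α′(ℓ) = − ∫_{ℝ} φ(−ℓ/2 + b/ℓ) e^{−b/2} h(b) db, where φ(x) = e^{−x²/2}/√(2π); in particular α′(ℓ) < 0 for every ℓ > 0. -/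
open MeasureTheory ProbabilityTheory Real Filter Topology

/-- The standard normal density `φ(x) = e^{−x²/2}/√(2π)`. -/
noncomputable def stdNormalPDF (x : ℝ) : ℝ :=
  Real.exp (-x ^ 2 / 2) / Real.sqrt (2 * Real.pi)

lemma aux_pdf_cont : Continuous stdNormalPDF := by
  unfold stdNormalPDF
  fun_prop

lemma aux_pdf_pos (x : ℝ) : 0 < stdNormalPDF x := by
  unfold stdNormalPDF
  positivity

lemma aux_pdf_int : Integrable stdNormalPDF := by
  unfold stdNormalPDF
  have := (integrable_exp_neg_mul_sq (b := 1/2) (by norm_num)).div_const (Real.sqrt (2 * Real.pi))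
  refine this.congr (Eventually.of_forall fun x => ?_)
  simp only
  congr 2
  ring

lemma aux_cdf_eq (x : ℝ) :
    stdNormalCDF x = stdNormalCDF 0 + ∫ t in (0:ℝ)..x, stdNormalPDF t := by
  have := intervalIntegral.integral_Iic_sub_Iic (f := stdNormalPDF) (μ := volume) (a := 0) (b := x)
    aux_pdf_int.integrableOn aux_pdf_int.integrableOn
  have h1 : ∀ y, stdNormalCDF y = ∫ t in Set.Iic y, stdNormalPDF t := fun y => rfl
  rw [h1, h1]
  linarith

lemma aux_cdf_deriv (x : ℝ) : HasDerivAt stdNormalCDF (stdNormalPDF x) x := by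
  have h1 : stdNormalCDF = fun x => stdNormalCDF 0 + ∫ t in (0:ℝ)..x, stdNormalPDF t :=
    funext aux_cdf_eq
  rw [h1]
  exact (intervalIntegral.integral_hasDerivAt_right (aux_pdf_cont.intervalIntegrable _ _)
    aux_pdf_cont.stronglyMeasurable.stronglyMeasurableAtFilter aux_pdf_cont.continuousAt).const_add _

lemma aux_cdf_cont : Continuous stdNormalCDF :=
  continuous_iff_continuousAt.2 fun x => (aux_cdf_deriv x).continuousAt

lemma aux_cdf_bound (x : ℝ) : ‖stdNormalCDF x‖ ≤ ∫ t, stdNormalPDF t := by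
  have h1 : stdNormalCDF x = ∫ t in Set.Iic x, stdNormalPDF t := rfl
  have h0 : 0 ≤ stdNormalCDF x := by
    rw [h1]; exact integral_nonneg fun t => (aux_pdf_pos t).le
  rw [Real.norm_of_nonneg h0, h1]
  exact setIntegral_le_integral aux_pdf_int (Eventually.of_forall fun t => (aux_pdf_pos t).le)

lemma aux_pdf_le (x : ℝ) : stdNormalPDF x * (1 + x ^ 2 / 2) ≤ 1 := by
  unfold stdNormalPDF
  have h2 : 1 ≤ Real.sqrt (2 * Real.pi) := by
    rw [Real.one_le_sqrt]
    have := Real.pi_gt_three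
    linarith
  have h3 : x ^ 2 / 2 + 1 ≤ Real.exp (x ^ 2 / 2) := Real.add_one_le_exp _
  have h4 : Real.exp (-x ^ 2 / 2) * Real.exp (x ^ 2 / 2) = 1 := by
    rw [← Real.exp_add]; ring_nf; simp
  rw [div_mul_eq_mul_div, div_le_one (by linarith)]
  have h5 := Real.exp_pos (-x ^ 2 / 2)
  nlinarith

lemma aux_bound (u c : ℝ) : |stdNormalPDF u * (-u * c - 1)| ≤ |c| + 1 := by
  have h1 := aux_pdf_le u
  have h2 := aux_pdf_pos u
  have h3 : stdNormalPDF u ≤ 1 := by nlinarith [sq_nonneg u]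
  have h4 : stdNormalPDF u * |u| ≤ 1 := by
    have : |u| ≤ 1 + u ^ 2 / 2 := by
      rw [← sq_abs u]; nlinarith [sq_nonneg (|u| - 1)]
    nlinarith
  rw [abs_mul, abs_of_pos h2]
  have h5 : |-u * c - 1| ≤ |u| * |c| + 1 := by
    have := abs_sub (-u * c) 1
    rwa [abs_mul, abs_neg, abs_one] at this
  calc _ ≤ stdNormalPDF u * (|u| * |c| + 1) := by gcongr
    _ = (stdNormalPDF u * |u|) * |c| + stdNormalPDF u := by ring
    _ ≤ 1 * |c| + 1 := by gcongr
    _ = _ := by ring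

/-- derivative of the limiting acceptance rate.  With `B` having
density `ρ` satisfying `ρ(b) = e^{−b} ρ(−b)`, `h(b) = e^{b/2} ρ(b)` and
`α(ℓ) = 2 E[Φ(B/ℓ − ℓ/2)]`, `α` is differentiable on `(0,∞)` with
`α′(ℓ) = −∫ φ(−ℓ/2 + b/ℓ) e^{−b/2} h(b) db < 0`. -/
theorem stmt8
    (ρ : ℝ → ℝ) (hρ_meas : Measurable ρ) (hρ_nonneg : ∀ b, 0 ≤ ρ b)
    (μB : Measure ℝ)
    (hμB : μB = volume.withDensity fun b => ENNReal.ofReal (ρ b))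
    (hμB_prob : IsProbabilityMeasure μB)
    (hρ_sym : ∀ b, ρ b = Real.exp (-b) * ρ (-b))
    (h : ℝ → ℝ) (hh : ∀ b, h b = Real.exp (b / 2) * ρ b)
    (α : ℝ → ℝ) (hα : ∀ ℓ, α ℓ = 2 * ∫ b, stdNormalCDF (b / ℓ - ℓ / 2) ∂μB) :
    ∀ ℓ > (0 : ℝ),
      HasDerivAt α
        (-(∫ b : ℝ, stdNormalPDF (-ℓ / 2 + b / ℓ) * (Real.exp (-b / 2) * h b))) ℓ ∧
      0 < ∫ b : ℝ, stdNormalPDF (-ℓ / 2 + b / ℓ) * (Real.exp (-b / 2) * h b) := by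
  intro ℓ hℓ
  have hρh : ∀ b, Real.exp (-b / 2) * h b = ρ b := by
    intro b
    rw [hh, ← mul_assoc, ← Real.exp_add]
    ring_nf
    simp
  simp only [hρh]
  have hconv : ∀ g : ℝ → ℝ, ∫ b, g b ∂μB = ∫ b, g b * ρ b := by
    intro g
    rw [hμB, integral_withDensity_eq_integral_toReal_smul
      hρ_meas.ennreal_ofReal (Eventually.of_forall fun _ => ENNReal.ofReal_lt_top)]
    refine integral_congr_ae (Eventually.of_forall fun b => ?_)
    simp only [smul_eq_mul, ENNReal.toReal_ofReal (hρ_nonneg b)]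
    ring
  have hpint : Integrable (fun b => stdNormalPDF (-ℓ / 2 + b / ℓ)) μB := by
    refine Integrable.of_bound (C := 1)
      (aux_pdf_cont.comp (by fun_prop)).aestronglyMeasurable (Eventually.of_forall fun b => ?_)
    have h2 := aux_pdf_pos (-ℓ / 2 + b / ℓ)
    rw [Real.norm_of_nonneg h2.le]
    nlinarith [aux_pdf_le (-ℓ / 2 + b / ℓ), sq_nonneg (-ℓ / 2 + b / ℓ)]
  refine ⟨?_, ?_⟩
  · have key := hasDerivAt_integral_of_dominated_loc_of_deriv_le (μ := μB) (x₀ := ℓ)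
      (F := fun x b => stdNormalCDF (b / x - x / 2))
      (F' := fun x b => stdNormalPDF (b / x - x / 2) * (-(b / x - x / 2) * x⁻¹ - 1))
      (s := Set.Ioi (ℓ / 2)) (bound := fun _ => 2 / ℓ + 1)
      (Ioi_mem_nhds (by linarith))
      (Eventually.of_forall fun x => (aux_cdf_cont.comp (by fun_prop)).aestronglyMeasurable)
      (Integrable.of_bound (aux_cdf_cont.comp (by fun_prop)).aestronglyMeasurable
        (∫ t, stdNormalPDF t) (Eventually.of_forall fun b => aux_cdf_bound _))
      (by
        refine Continuous.aestronglyMeasurable ?_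
        exact (aux_pdf_cont.comp (by fun_prop)).mul (by fun_prop))
      (Eventually.of_forall fun b x hx => by
        have hx' : ℓ / 2 < x := hx
        rw [Real.norm_eq_abs]
        refine (aux_bound _ _).trans ?_
        have hx0 : 0 < x := by linarith
        rw [abs_of_pos (inv_pos.2 hx0)]
        have : x⁻¹ ≤ (ℓ / 2)⁻¹ := by gcongr
        rw [inv_div] at this
        linarith)
      (integrable_const _)
      (Eventually.of_forall fun b x hx => by
        have hx' : ℓ / 2 < x := hx
        have hx0 : x ≠ 0 := by intro h0; linarith
        have h1 : HasDerivAt (fun x : ℝ => b / x - x / 2) (-(b / x - x / 2) * x⁻¹ - 1) x := by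
          have h2 := ((hasDerivAt_inv hx0).const_mul b).sub ((hasDerivAt_id x).div_const 2)
          refine (h2.congr_deriv ?_)
          field_simp
          ring
        exact (aux_cdf_deriv _).comp x h1)
    obtain ⟨hint, hder⟩ := key
    have hαf : α = fun ℓ => 2 * ∫ b, stdNormalCDF (b / ℓ - ℓ / 2) ∂μB := funext hα
    rw [hαf]
    refine (hder.const_mul 2).congr_deriv ?_
    rw [← hconv, ← integral_const_mul, ← sub_eq_zero, sub_neg_eq_add,
      ← integral_add (hint.const_mul 2) hpint, hconv]
    set G : ℝ → ℝ := fun b => (2 * (stdNormalPDF (b / ℓ - ℓ / 2) *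
      (-(b / ℓ - ℓ / 2) * ℓ⁻¹ - 1)) + stdNormalPDF (-ℓ / 2 + b / ℓ)) * ρ b with hG
    have hodd : ∀ b, G (-b) = - G b := by
      intro b
      have e1 : -ℓ / 2 + b / ℓ = b / ℓ - ℓ / 2 := by ring
      have e2 : -ℓ / 2 + -b / ℓ = -b / ℓ - ℓ / 2 := by ring
      have e3 : stdNormalPDF (b / ℓ - ℓ / 2) = stdNormalPDF (-b / ℓ - ℓ / 2) * Real.exp b := by
        unfold stdNormalPDF
        rw [div_mul_eq_mul_div, ← Real.exp_add]
        congr 2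
        field_simp
        ring
      have e4 : Real.exp b * Real.exp (-b) = 1 := by rw [← Real.exp_add]; simp
      simp only [hG]
      rw [e1, e2, e3, hρ_sym b]
      have e5 : ∀ P R : ℝ, (2 * (P * Real.exp b * (-(b / ℓ - ℓ / 2) * ℓ⁻¹ - 1)) + P * Real.exp b) *
          (Real.exp (-b) * R) = (2 * (P * (-(b / ℓ - ℓ / 2) * ℓ⁻¹ - 1)) + P) * R *
          (Real.exp b * Real.exp (-b)) := by intros; ring
      rw [e5, e4]
      field_simp
      ring
    have h1 : ∫ b, G (-b) = ∫ b, G b := integral_neg_eq_self G volume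
    simp only [hodd] at h1
    rw [integral_neg] at h1
    linarith
  · rw [← hconv, integral_pos_iff_support_of_nonneg (fun b => (aux_pdf_pos _).le) hpint]
    have : Function.support (fun b => stdNormalPDF (-ℓ / 2 + b / ℓ)) = Set.univ := by
      ext b
      simp [(aux_pdf_pos (-ℓ / 2 + b / ℓ)).ne']
    rw [this, measure_univ]
    exact one_pos
end

section
/- (Proposition 2: bounds on the relative efficiency.) Let g* be a probability density on ℝ with ∫ e^w g*(w) dw = 1. Let W* have density g*, let W be independent of W* with density e^w g*(w), and set B = W* − W. Fix ℓ > 0 and let V be Gaussian with mean −ℓ²/2 and variance ℓ², independent of (W, W*). Define J_rel(ℓ) = E[Φ(B/ℓ − ℓ/2)] / Φ(−ℓ/2) and α_max = 2·P(B > 0), where Φ is the standard normal cumulative distribution function. Then α_max ≤ J_rel(ℓ) ≤ 1; equivalently, E[min(1, e^V)] · E[min(1, e^B)] ≤ E[min(1, exp(V + B))] ≤ E[min(1, e^V)] = 2·Φ(−ℓ/2), and E[min(1, e^B)] = 2·P(B > 0). -/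
open MeasureTheory ProbabilityTheory Real

def SymR {Ω : Type*} [MeasurableSpace Ω] (m : Measure Ω) (A : Ω → ℝ) : Prop :=
  ∀ h : ℝ → ENNReal, Measurable h →
    ∫⁻ ω, ENNReal.ofReal (Real.exp (A ω)) * h (A ω) ∂m = ∫⁻ ω, h (-A ω) ∂m

lemma symR_min {Ω : Type*} [MeasurableSpace Ω] (m : Measure Ω) [IsProbabilityMeasure m]
    (A : Ω → ℝ) (hA : Measurable A) (hs : SymR m A) (h0 : m {ω | A ω = 0} = 0) :
    ∫ ω, min 1 (Real.exp (A ω)) ∂m = 2 * (m {ω | 0 < A ω}).toReal := by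
  rw [integral_eq_lintegral_of_nonneg_ae]
  rotate_left
  · exact Filter.Eventually.of_forall fun ω => le_min zero_le_one (Real.exp_pos _).le
  · exact (by fun_prop : Measurable fun ω => min 1 (Real.exp (A ω))).aestronglyMeasurable
  have hS : MeasurableSet {ω | 0 < A ω} := measurableSet_lt measurable_const hA
  let h : ℝ → ENNReal := (Set.Iio (0:ℝ)).indicator 1
  have hh : Measurable h := measurable_one.indicator measurableSet_Iio
  have key : ∫⁻ ω, ENNReal.ofReal (min 1 (Real.exp (A ω))) ∂m
      = ∫⁻ ω, ({ω | 0 < A ω}.indicator 1 ω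
          + ENNReal.ofReal (Real.exp (A ω)) * h (A ω)) ∂m := by
    apply lintegral_congr_ae
    have : ∀ᵐ ω ∂m, A ω ≠ 0 := by
      rw [ae_iff]; simpa using h0
    filter_upwards [this] with ω hω
    rcases lt_or_gt_of_ne hω with h1 | h1
    · have : min 1 (Real.exp (A ω)) = Real.exp (A ω) :=
        min_eq_right (Real.exp_le_one_iff.2 h1.le)
      simp [h, h1, h1.not_gt, this]
    · have : min 1 (Real.exp (A ω)) = 1 :=
        min_eq_left (Real.one_le_exp h1.le)
      simp [h, h1, h1.not_gt, this]
  have h2 : ∫⁻ ω, h (-A ω) ∂m = m {ω | 0 < A ω} := by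
    rw [← lintegral_indicator_one hS]
    apply lintegral_congr
    intro ω
    simp [h, Set.indicator_apply]
  rw [key, lintegral_add_left (measurable_one.indicator hS), hs h hh, h2,
    lintegral_indicator_one hS, ENNReal.toReal_add (measure_ne_top _ _) (measure_ne_top _ _)]
  ring

lemma symR_add {Ω Ω' : Type*} [MeasurableSpace Ω] [MeasurableSpace Ω']
    (m : Measure Ω) (n : Measure Ω') [IsProbabilityMeasure m] [IsProbabilityMeasure n]
    (A : Ω → ℝ) (B : Ω' → ℝ) (hA : Measurable A) (hB : Measurable B)
    (hsA : SymR m A) (hsB : SymR n B) :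
    SymR (m.prod n) (fun q => A q.1 + B q.2) := by
  intro h hh
  rw [lintegral_prod _ (by fun_prop), lintegral_prod_symm _ (by fun_prop)]
  have e1 : ∀ x, ∫⁻ y, ENNReal.ofReal (Real.exp (A x + B y)) * h (A x + B y) ∂n
      = ENNReal.ofReal (Real.exp (A x)) * ∫⁻ y, h (A x + - B y) ∂n := by
    intro x
    rw [← hsB (fun t => h (A x + t)) (by fun_prop), ← lintegral_const_mul _ (by fun_prop)]
    apply lintegral_congr
    intro y
    rw [Real.exp_add, ENNReal.ofReal_mul (Real.exp_pos _).le, mul_assoc]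
  simp only [e1]
  have e2 : ∀ x, ENNReal.ofReal (Real.exp (A x)) * ∫⁻ y, h (A x + - B y) ∂n
      = ∫⁻ y, ENNReal.ofReal (Real.exp (A x)) * h (A x + - B y) ∂n := by
    intro x
    rw [lintegral_const_mul _ (by fun_prop)]
  simp only [e2]
  rw [lintegral_lintegral_swap (by fun_prop)]
  apply lintegral_congr
  intro y
  rw [hsA (fun t => h (t + - B y)) (by fun_prop)]
  apply lintegral_congr
  intro x
  congr 1; ring

lemma symR_gauss (ℓ : ℝ) (hℓ : 0 < ℓ) (s : NNReal) (hs2 : (s : ℝ) = ℓ ^ 2) :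
    SymR (gaussianReal (-ℓ ^ 2 / 2) s) (fun v => v) := by
  intro h hh
  have hv : s ≠ 0 := by
    intro h
    rw [h] at hs2
    exact (pow_pos hℓ 2).ne' hs2.symm
  rw [gaussianReal_of_var_ne_zero _ hv,
    lintegral_withDensity_eq_lintegral_mul _ (measurable_gaussianPDF _ _) (by fun_prop),
    lintegral_withDensity_eq_lintegral_mul _ (measurable_gaussianPDF _ _) (by fun_prop),
    ← lintegral_neg_eq_self]
  apply lintegral_congr
  intro x
  simp only [Pi.mul_apply]
  rw [← mul_assoc]
  congr 1
  simp only [gaussianPDF]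
  rw [← ENNReal.ofReal_mul (gaussianPDFReal_nonneg _ _ _)]
  congr 1
  simp only [gaussianPDFReal, hs2]
  rw [mul_assoc, ← Real.exp_add]
  congr 2
  field_simp
  ring

lemma cdf_eq (x : ℝ) : stdNormalCDF x = (gaussianReal 0 1 (Set.Iic x)).toReal := by
  rw [gaussianReal_apply_eq_integral _ one_ne_zero, ENNReal.toReal_ofReal]
  · unfold stdNormalCDF
    congr 1
    funext t
    simp [gaussianPDFReal]
    ring
  · exact setIntegral_nonneg measurableSet_Iic fun t _ => gaussianPDFReal_nonneg _ _ _

lemma cdf_pos (x : ℝ) : 0 < stdNormalCDF x := by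
  unfold stdNormalCDF
  have hint : Integrable (fun t : ℝ => Real.exp (-t ^ 2 / 2) / Real.sqrt (2 * Real.pi)) := by
    have := integrable_gaussianPDFReal 0 1
    convert this using 2 with t
    simp [gaussianPDFReal]
    ring
  rw [integral_pos_iff_support_of_nonneg (fun t => by positivity) hint.integrableOn]
  have : Function.support (fun t : ℝ => Real.exp (-t ^ 2 / 2) / Real.sqrt (2 * Real.pi))
      = Set.univ := by
    ext t
    simp only [Function.mem_support, Set.mem_univ, iff_true]
    positivity
  rw [this]
  simp

lemma gauss_tail (ℓ : ℝ) (hℓ : 0 < ℓ) (s : NNReal) (hs2 : (s : ℝ) = ℓ ^ 2) (b : ℝ) :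
    gaussianReal (-ℓ ^ 2 / 2) s {v | 0 < v + b}
      = gaussianReal 0 1 (Set.Iic (b / ℓ - ℓ / 2)) := by
  have e : gaussianReal (-ℓ ^ 2 / 2) s
      = (gaussianReal 0 1).map (fun x => -ℓ ^ 2 / 2 + (-ℓ) * x) := by
    have : (fun x : ℝ => -ℓ ^ 2 / 2 + (-ℓ) * x)
      = (fun x => -ℓ ^ 2 / 2 + x) ∘ (fun x => (-ℓ) * x) := rfl
    rw [this, ← Measure.map_map (by fun_prop) (by fun_prop), gaussianReal_map_const_mul,
      gaussianReal_map_const_add]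
    congr 1
    · ring
    · ext; simp [hs2]
  rw [e, Measure.map_apply (by fun_prop) (measurableSet_lt (by fun_prop) (by fun_prop))]
  have : NullSingletonClass (gaussianReal 0 1) := nullSingletonClass_gaussianReal one_ne_zero
  rw [← measure_congr (Iio_ae_eq_Iic (μ := gaussianReal 0 1) (a := b / ℓ - ℓ / 2))]
  congr 1
  ext x
  simp only [Set.mem_preimage, Set.mem_ofPred_eq, Set.mem_Iio]
  have : -ℓ ^ 2 / 2 + -ℓ * x + b = ℓ * ((b / ℓ - ℓ / 2) - x) := by
    field_simp; ring
  rw [this, mul_pos_iff_of_pos_left hℓ, sub_pos]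

lemma dens_eq (g : ℝ → ℝ) (hg_meas : Measurable g) :
    (volume.withDensity fun w => ENNReal.ofReal (Real.exp w * g w)) =
      (volume.withDensity fun w => ENNReal.ofReal (g w)).withDensity
        (fun w => ENNReal.ofReal (Real.exp w)) := by
  rw [← withDensity_mul _ (by fun_prop) (by fun_prop)]
  congr 1
  funext w
  simp only [Pi.mul_apply]
  rw [mul_comm, ENNReal.ofReal_mul' (Real.exp_pos _).le]

lemma lint_W (μ : Measure ℝ) [SFinite μ] (f : ℝ × ℝ → ENNReal) (hf : Measurable f) :
    ∫⁻ p, f p ∂((μ.withDensity (fun w => ENNReal.ofReal (Real.exp w))).prod μ)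
      = ∫⁻ y, ∫⁻ x, ENNReal.ofReal (Real.exp x) * f (x, y) ∂μ ∂μ := by
  rw [lintegral_prod_symm _ hf.aemeasurable]
  apply lintegral_congr
  intro y
  rw [lintegral_withDensity_eq_lintegral_mul _ (by fun_prop) (by fun_prop)]
  rfl

lemma symR_B (μ : Measure ℝ) [SFinite μ] :
    SymR ((μ.withDensity (fun w => ENNReal.ofReal (Real.exp w))).prod μ)
      (fun p => p.2 - p.1) := by
  intro h hh
  rw [lint_W _ _ (by fun_prop), lint_W _ _ (by fun_prop),
    lintegral_lintegral_swap (by fun_prop)]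
  apply lintegral_congr
  intro x
  apply lintegral_congr
  intro y
  simp only
  rw [← mul_assoc, ← ENNReal.ofReal_mul (Real.exp_pos _).le, ← Real.exp_add]
  congr 2
  · congr 1; ring
  · ring

/-- Proposition 2: bounds on the relative efficiency.  With `W*` of
density `g*`, `W` of density `e^w g*(w)` independent, `B = W* − W`, and
`V ∼ N(−ℓ²/2, ℓ²)` independent of `(W, W*)`:
`E[min(1,e^V)] E[min(1,e^B)] ≤ E[min(1,exp(V+B))] ≤ E[min(1,e^V)] = 2Φ(−ℓ/2)`,
`E[min(1,e^B)] = 2 P(B > 0)`, and hence `α_max ≤ J_rel(ℓ) ≤ 1`. -/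
theorem stmt9 (ℓ : ℝ) (hℓ : 0 < ℓ)
    (g : ℝ → ℝ) (hg_meas : Measurable g) (hg_nonneg : ∀ w, 0 ≤ g w)
    (μWs μW : Measure ℝ)
    (hμWs : μWs = volume.withDensity fun w => ENNReal.ofReal (g w))
    (hμW : μW = volume.withDensity fun w => ENNReal.ofReal (Real.exp w * g w))
    (hμWs_prob : IsProbabilityMeasure μWs) (hμW_prob : IsProbabilityMeasure μW)
    (μV : Measure ℝ) (hμV : μV = gaussianReal (-ℓ ^ 2 / 2) ⟨ℓ ^ 2, sq_nonneg ℓ⟩) :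
    -- lower bound: E[min(1,e^V)]·E[min(1,e^B)] ≤ E[min(1,exp(V+B))]
    ((∫ v, min 1 (Real.exp v) ∂μV) *
        ∫ p : ℝ × ℝ, min 1 (Real.exp (p.2 - p.1)) ∂(μW.prod μWs)) ≤
      (∫ q : ℝ × (ℝ × ℝ), min 1 (Real.exp (q.1 + (q.2.2 - q.2.1)))
        ∂(μV.prod (μW.prod μWs))) ∧
    -- upper bound: E[min(1,exp(V+B))] ≤ E[min(1,e^V)]
    (∫ q : ℝ × (ℝ × ℝ), min 1 (Real.exp (q.1 + (q.2.2 - q.2.1)))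
        ∂(μV.prod (μW.prod μWs))) ≤ (∫ v, min 1 (Real.exp v) ∂μV) ∧
    -- E[min(1,e^V)] = 2Φ(−ℓ/2)
    (∫ v, min 1 (Real.exp v) ∂μV) = 2 * stdNormalCDF (-ℓ / 2) ∧
    -- E[min(1,e^B)] = 2 P(B > 0)
    (∫ p : ℝ × ℝ, min 1 (Real.exp (p.2 - p.1)) ∂(μW.prod μWs)) =
      2 * ((μW.prod μWs) {p : ℝ × ℝ | 0 < p.2 - p.1}).toReal ∧
    -- α_max ≤ J_rel(ℓ) ≤ 1
    (2 * ((μW.prod μWs) {p : ℝ × ℝ | 0 < p.2 - p.1}).toReal ≤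
        (∫ p : ℝ × ℝ, stdNormalCDF ((p.2 - p.1) / ℓ - ℓ / 2) ∂(μW.prod μWs)) /
          stdNormalCDF (-ℓ / 2) ∧
      (∫ p : ℝ × ℝ, stdNormalCDF ((p.2 - p.1) / ℓ - ℓ / 2) ∂(μW.prod μWs)) /
          stdNormalCDF (-ℓ / 2) ≤ 1) := by
  obtain ⟨s, hs2, hμV⟩ : ∃ s : NNReal, (s : ℝ) = ℓ ^ 2 ∧ μV = gaussianReal (-ℓ ^ 2 / 2) s :=
    ⟨⟨ℓ ^ 2, sq_nonneg ℓ⟩, rfl, hμV⟩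
  have hW : μW = μWs.withDensity (fun w => ENNReal.ofReal (Real.exp w)) := by
    rw [hμW, hμWs, dens_eq g hg_meas]
  have hsB : SymR (μW.prod μWs) (fun p => p.2 - p.1) := by
    rw [hW]; exact symR_B μWs
  have : NullSingletonClass μWs := by rw [hμWs]; infer_instance
  have hatom : ∀ c : ℝ, (μW.prod μWs) {p : ℝ × ℝ | p.2 - p.1 = c} = 0 := by
    intro c
    rw [Measure.measure_prod_null (measurableSet_eq_fun (by fun_prop) (by fun_prop))]
    refine Filter.Eventually.of_forall fun x => ?_
    have : Prod.mk x ⁻¹' {p : ℝ × ℝ | p.2 - p.1 = c} = {c + x} := by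
      ext y; simp [sub_eq_iff_eq_add]
    change μWs (Prod.mk x ⁻¹' {p : ℝ × ℝ | p.2 - p.1 = c}) = 0
    rw [this]; simp
  have hVp : IsProbabilityMeasure μV := by rw [hμV]; infer_instance
  have hsV : SymR μV (fun v => v) := by rw [hμV]; exact symR_gauss ℓ hℓ s hs2
  have htail : ∀ b, μV {v | 0 < v + b} = gaussianReal 0 1 (Set.Iic (b / ℓ - ℓ / 2)) := by
    intro b; rw [hμV]; exact gauss_tail ℓ hℓ s hs2 b
  have hv : s ≠ 0 := by
    intro h
    rw [h] at hs2
    exact (pow_pos hℓ 2).ne' hs2.symm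
  have : NullSingletonClass μV := by rw [hμV]; exact nullSingletonClass_gaussianReal hv
  -- identities
  have hV2 : (∫ v, min 1 (Real.exp v) ∂μV) = 2 * stdNormalCDF (-ℓ / 2) := by
    rw [symR_min μV (fun v => v) measurable_id hsV (by simp), cdf_eq]
    have := htail 0
    simp only [add_zero, zero_div, zero_sub] at this
    rw [this, neg_div]
  have hB2 := symR_min (μW.prod μWs) (fun p => p.2 - p.1) (by fun_prop) hsB (hatom 0)
  have hA2 : (∫ q : ℝ × (ℝ × ℝ), min 1 (Real.exp (q.1 + (q.2.2 - q.2.1)))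
        ∂(μV.prod (μW.prod μWs))) =
      2 * ∫ p : ℝ × ℝ, stdNormalCDF ((p.2 - p.1) / ℓ - ℓ / 2) ∂(μW.prod μWs) := by
    have hs := symR_add μV (μW.prod μWs) (fun v => v) (fun p => p.2 - p.1)
      measurable_id (by fun_prop) hsV hsB
    have hm : MeasurableSet {q : ℝ × (ℝ × ℝ) | 0 < q.1 + (q.2.2 - q.2.1)} :=
      measurableSet_lt (by fun_prop) (by fun_prop)
    rw [symR_min (μV.prod (μW.prod μWs)) (fun q => q.1 + (q.2.2 - q.2.1)) (by fun_prop) hs]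
    · congr 1
      have hm2 := measurable_measure_prodMk_right (μ := μV) hm
      rw [Measure.prod_apply_symm hm, ← integral_toReal]
      · apply integral_congr_ae
        refine Filter.Eventually.of_forall fun p => ?_
        simp only [cdf_eq]
        rw [← htail]
        rfl
      · exact hm2.aemeasurable
      · exact Filter.Eventually.of_forall fun p => measure_lt_top _ _
    · rw [Measure.measure_prod_null (measurableSet_eq_fun (by fun_prop) (by fun_prop))]
      refine Filter.Eventually.of_forall fun v => ?_
      have : Prod.mk v ⁻¹' {q : ℝ × (ℝ × ℝ) | q.1 + (q.2.2 - q.2.1) = 0}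
          = {p : ℝ × ℝ | p.2 - p.1 = -v} := by
        ext p
        simp only [Set.mem_preimage, Set.mem_ofPred_eq]
        constructor <;> intro h <;> linarith
      change (μW.prod μWs) (Prod.mk v ⁻¹' {q : ℝ × (ℝ × ℝ) | q.1 + (q.2.2 - q.2.1) = 0}) = 0
      rw [this, hatom]
  have hbd : ∀ x : ℝ, ‖min 1 (Real.exp x)‖ ≤ 1 := by
    intro x
    rw [Real.norm_of_nonneg (le_min zero_le_one (Real.exp_pos _).le)]
    exact min_le_left _ _
  have hintA : Integrable (fun q : ℝ × (ℝ × ℝ) => min 1 (Real.exp (q.1 + (q.2.2 - q.2.1))))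
      (μV.prod (μW.prod μWs)) :=
    Integrable.of_bound (by fun_prop : Measurable _).aestronglyMeasurable 1
      (Filter.Eventually.of_forall fun q => hbd _)
  have hintV : Integrable (fun v => min 1 (Real.exp v)) μV :=
    Integrable.of_bound (by fun_prop : Measurable _).aestronglyMeasurable 1
      (Filter.Eventually.of_forall fun q => hbd _)
  have hintB : Integrable (fun p : ℝ × ℝ => min 1 (Real.exp (p.2 - p.1))) (μW.prod μWs) :=
    Integrable.of_bound (by fun_prop : Measurable _).aestronglyMeasurable 1
      (Filter.Eventually.of_forall fun q => hbd _)
  have hlow : ((∫ v, min 1 (Real.exp v) ∂μV) *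
        ∫ p : ℝ × ℝ, min 1 (Real.exp (p.2 - p.1)) ∂(μW.prod μWs)) ≤
      (∫ q : ℝ × (ℝ × ℝ), min 1 (Real.exp (q.1 + (q.2.2 - q.2.1)))
        ∂(μV.prod (μW.prod μWs))) := by
    rw [← integral_prod_mul]
    refine integral_mono (hintV.mul_prod hintB) hintA fun q => ?_
    simp only
    rw [Real.exp_add]
    have h1 := Real.exp_pos q.1
    have h2 := Real.exp_pos (q.2.2 - q.2.1)
    refine le_min ?_ ?_
    · exact mul_le_one₀ (min_le_left _ _) (le_min zero_le_one h2.le) (min_le_left _ _)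
    · exact mul_le_mul (min_le_right _ _) (min_le_right _ _) (le_min zero_le_one h2.le) h1.le
  have hexpL : ∫⁻ p : ℝ × ℝ, ENNReal.ofReal (Real.exp (p.2 - p.1)) ∂(μW.prod μWs) = 1 := by
    have := hsB 1 measurable_one
    simpa using this
  have hexpI : Integrable (fun p : ℝ × ℝ => Real.exp (p.2 - p.1)) (μW.prod μWs) := by
    refine ⟨(by fun_prop : Measurable _).aestronglyMeasurable, ?_⟩
    rw [hasFiniteIntegral_iff_ofReal (Filter.Eventually.of_forall fun p => (Real.exp_pos _).le),
      hexpL]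
    exact ENNReal.one_lt_top
  have hexp1 : ∫ p : ℝ × ℝ, Real.exp (p.2 - p.1) ∂(μW.prod μWs) = 1 := by
    rw [integral_eq_lintegral_of_nonneg_ae
      (Filter.Eventually.of_forall fun p => (Real.exp_pos _).le)
      (by fun_prop : Measurable _).aestronglyMeasurable, hexpL]
    simp
  have hup : (∫ q : ℝ × (ℝ × ℝ), min 1 (Real.exp (q.1 + (q.2.2 - q.2.1)))
        ∂(μV.prod (μW.prod μWs))) ≤ (∫ v, min 1 (Real.exp v) ∂μV) := by
    rw [integral_prod _ hintA]
    refine integral_mono hintA.integral_prod_left hintV fun v => ?_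
    have hi : Integrable (fun p : ℝ × ℝ => min 1 (Real.exp (v + (p.2 - p.1))))
        (μW.prod μWs) :=
      Integrable.of_bound (by fun_prop : Measurable _).aestronglyMeasurable 1
        (Filter.Eventually.of_forall fun q => hbd _)
    refine le_min ?_ ?_
    · calc _ ≤ ∫ p : ℝ × ℝ, (1:ℝ) ∂(μW.prod μWs) :=
            integral_mono hi (integrable_const _) fun p => min_le_left _ _
        _ = 1 := by simp
    · calc _ ≤ ∫ p : ℝ × ℝ, Real.exp v * Real.exp (p.2 - p.1) ∂(μW.prod μWs) :=
            integral_mono hi (hexpI.const_mul _) fun p => by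
              simp only
              rw [← Real.exp_add]; exact min_le_right _ _
        _ = Real.exp v := by rw [integral_const_mul, hexp1, mul_one]
  have hpos := cdf_pos (-ℓ / 2)
  refine ⟨hlow, hup, hV2, hB2, ?_, ?_⟩
  · rw [le_div_iff₀ hpos, ← hB2]
    rw [hV2, hA2] at hlow
    linarith
  · rw [div_le_one hpos]
    rw [hV2, hA2] at hup
    linarith
end
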